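/- arXiv:1302.1715 — 4 statements merged into one kernel-verified Lean document; each statement's English description precedes it below -/
import Mathlib

section
/- Let p be an odd prime. If p ≡ 1 or 3 (mod 8), then there are integers x, y with p = x^2 + 2y^2, and for any such x, Σ_{n=0}^{p-1} A_n · 8^{-n} ≡ 4x^2 (mod p). If p ≡ 5 or 7 (mod 8), then Σ_{n=0}^{p-1} A_n · 8^{-n} ≡ 0 (mod p). -/
open Finset

/-- `A n = ∑_{k=0}^{n} C(2k,k)·C(2n-2k,n-k)·C(n,k)^2`. -/
def A (n : ℕ) : ℕ :=
  ∑ k ∈ Finset.range (n + 1),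
    Nat.choose (2 * k) k * Nat.choose (2 * n - 2 * k) (n - k) * Nat.choose n k ^ 2

/-!
Let `p > 3` and write `S` for the sum modulo `p`. Fermat's little theorem collapses the sum over `n`
to `S = ∑ C(3j,j) C(2j,j)² / 8 ^ j`. Truncated hypergeometric sums modulo `p` are values of Legendre
polynomials, so Clausen's formula for the square of a Legendre polynomial gives
`S = (∑ C(3j,j) C(2j,j) x ^ j)²` with `x = (2 + 5 s) / 108`, `s² = -2`.

The sum inside the square is the coefficient of `X ^ (p - 1)` in
`(4 X³ + (X + x)²) ^ ((p - 1) / 2)`, the Hasse invariant of an elliptic curve with complex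
multiplication by `ℤ[√-2]`. This coefficient is invariant under translation, and translating by
`(s - 5) / 36` turns the cubic into `4 (X - 2d) (X² - 2d²)` with `d = (2 - s) / 24`, whose Hasse
invariant is a multiple of the Legendre polynomial of degree `⌊p/4⌋` at its centre of symmetry. It
vanishes for `p ≡ 5, 7 (mod 8)`; otherwise `S = C(⌊p/2⌋, ⌊p/8⌋)²`.

For a character `χ` of order `8` of a field with `q` elements, the Jacobi sum `J(χ, χ³)` is
`u + v √-2`, where the integers `u`, `v` do not depend on the ring in which `χ` takes its values.
Over `ℂ` the norm of the sum gives `u² + 2v² = q`; taking values in the field itself identifies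
`2u` with a binomial coefficient up to sign. For `p ≡ 1 (mod 8)` one takes `q = p`. For
`p ≡ 3 (mod 8)` one takes `q = p²`, reduces the binomial coefficient by Lucas' theorem and descends
to `p`; the remaining sign is settled because `-1` is not a square.
-/

section ChooseCast

lemma succ_mul_cast_choose_succ {R : Type*} [CommRing R] (n k : ℕ) :
    ((k : R) + 1) * n.choose (k + 1) = (n - k) * n.choose k := by
  rcases le_or_gt k n with hk | hk
  · have h := congrArg (Nat.cast : ℕ → R) (Nat.choose_succ_right_eq n k)
    push_cast [hk] at h
    linear_combination h
  · simp [Nat.choose_eq_zero_of_lt hk, Nat.choose_eq_zero_of_lt (hk.trans k.lt_succ_self)]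

lemma succ_sub_mul_cast_succ_choose {R : Type*} [CommRing R] (n k : ℕ) :
    ((n : R) + 1 - k) * (n + 1).choose k = (n + 1) * n.choose k := by
  cases k with
  | zero => simp
  | succ k =>
    have h := succ_mul_cast_choose_succ (R := R) n k
    push_cast [Nat.choose_succ_succ]
    linear_combination -h

lemma succ_mul_cast_choose_add_succ {R : Type*} [CommRing R] (n k : ℕ) :
    ((k : R) + 1) * (n + (k + 1)).choose (k + 1) = (n + k + 1) * (n + k).choose k := by
  have h := congrArg (Nat.cast : ℕ → R) (Nat.add_one_mul_choose_eq (n + k) k)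
  push_cast at h
  rw [← add_assoc]
  linear_combination -h

lemma succ_mul_cast_centralBinom_succ {R : Type*} [CommRing R] (k : ℕ) :
    ((k : R) + 1) * (k + 1).centralBinom = 2 * (2 * k + 1) * k.centralBinom := by
  exact_mod_cast congrArg (Nat.cast : ℕ → R) (Nat.succ_mul_centralBinom_succ k)

lemma cast_ne_zero_of_pos_of_lt {R : Type*} [AddMonoidWithOne R] {p : ℕ} [CharP R p] {i : ℕ}
    (hpos : 0 < i) (hlt : i < p) : (i : R) ≠ 0 := by
  rw [Ne, CharP.cast_eq_zero_iff R p]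
  exact Nat.not_dvd_of_pos_of_lt hpos hlt

variable {K : Type*} [Field K] {p : ℕ} [CharP K p]

lemma cast_add_one_ne_zero_of_lt {i : ℕ} (hi : i + 1 < p) : (i + 1 : K) ≠ 0 := by
  exact_mod_cast cast_ne_zero_of_pos_of_lt (R := K) i.succ_pos hi

lemma cast_choose_eq_neg_one_pow_mul_choose_add {a b : ℕ} (hab : a + b + 1 = p) {i : ℕ}
    (hi : i < p) : (b.choose i : K) = (-1) ^ i * (a + i).choose i := by
  have hsum : (a + b + 1 : K) = 0 := by
    exact_mod_cast hab ▸ CharP.cast_eq_zero K p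
  induction i with
  | zero => simp
  | succ i ih =>
    refine mul_left_cancel₀ (cast_add_one_ne_zero_of_lt (K := K) hi) ?_
    rw [succ_mul_cast_choose_succ, ih (by omega), pow_succ]
    linear_combination (-1) ^ i * succ_mul_cast_choose_add_succ (R := K) a i +
      (-1) ^ i * ((a + i).choose i : K) * hsum

lemma cast_centralBinom_eq_choose_mul_pow {n : ℕ} (hp : p = 2 * n + 1) {k : ℕ} (hk : k < p) :
    (k.centralBinom : K) = n.choose k * (-4) ^ k := by
  have hn : (2 * n + 1 : K) = 0 := by
    exact_mod_cast hp ▸ CharP.cast_eq_zero K p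
  induction k with
  | zero => simp
  | succ k ih =>
    refine mul_left_cancel₀ (cast_add_one_ne_zero_of_lt (K := K) hk) ?_
    rw [succ_mul_cast_centralBinom_succ, ih (by omega), pow_succ]
    linear_combination 4 * (-4) ^ k * succ_mul_cast_choose_succ (R := K) n k +
      2 * (n.choose k : K) * (-4) ^ k * hn

lemma factorial_three_mul (j : ℕ) :
    (3 * j).factorial = (3 * j).choose j * j.centralBinom * j.factorial ^ 3 := by
  have h₁ := Nat.choose_mul_factorial_mul_factorial (show j ≤ 3 * j by omega)
  have h₂ := Nat.choose_mul_factorial_mul_factorial (show j ≤ 2 * j by omega)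
  rw [show 3 * j - j = 2 * j by omega] at h₁
  rw [show 2 * j - j = j by omega] at h₂
  rw [← h₁, ← h₂, Nat.centralBinom]
  ring

lemma cast_choose_three_mul_mul_centralBinom_eq_zero [Fact p.Prime] {j : ℕ} (hj : j < p)
    (hp : p ≤ 3 * j) : ((3 * j).choose j * j.centralBinom : K) = 0 := by
  have hprime : p.Prime := Fact.out
  have hdvd : p ∣ (3 * j).choose j * j.centralBinom * j.factorial ^ 3 :=
    factorial_three_mul j ▸ hprime.dvd_factorial.2 hp
  have hfac : ¬ p ∣ j.factorial ^ 3 := fun h ↦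
    absurd (hprime.dvd_factorial.1 (hprime.dvd_of_dvd_pow h)) (by omega)
  exact_mod_cast (CharP.cast_eq_zero_iff K p _).2 ((hprime.dvd_mul.1 hdvd).resolve_right hfac)

lemma two_ne_zero_of_char_ne_two (hp : p ≠ 2) : (2 : K) ≠ 0 :=
  Ring.two_ne_zero (by rwa [ringChar.eq K p])

lemma natCast_pow_char_sub_one [Fact p.Prime] {a : ℕ} (ha : (a : K) ≠ 0) :
    (a : K) ^ (p - 1) = 1 := by
  refine mul_right_cancel₀ ha ?_
  rw [pow_sub_one_mul (Fact.out : p.Prime).ne_zero, one_mul]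
  exact map_natCast (frobenius K p) a

end ChooseCast

section DombNumbers

lemma sum_range_choose_mul_choose_mul_choose (k l i : ℕ) :
    ∑ j ∈ range (l + 1), k.choose j * l.choose j * j.choose i =
      l.choose i * (k + l - i).choose l := by
  rcases lt_or_ge l i with hli | hil
  · rw [Nat.choose_eq_zero_of_lt hli, zero_mul]
    refine sum_eq_zero fun j hj ↦ ?_
    rw [Nat.choose_eq_zero_of_lt (by grind : j < i), mul_zero]
  rw [Nat.add_sub_assoc hil, Nat.add_choose_eq, Nat.sum_antidiagonal_eq_sum_range_succ_mk,
    mul_sum]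
  refine sum_congr rfl fun j hj ↦ ?_
  have hjl : j ≤ l := by grind
  rcases le_or_gt i j with hij | hji
  · rw [mul_assoc, Nat.choose_mul hij,
      ← Nat.choose_symm_of_eq_add (show l - i = (l - j) + (j - i) by omega)]
    ring
  · rw [Nat.choose_eq_zero_of_lt hji, Nat.choose_eq_zero_of_lt (show l - i < l - j by omega)]
    simp

lemma sum_range_choose_mul_choose (k l : ℕ) :
    ∑ j ∈ range (l + 1), k.choose j * l.choose j = (k + l).choose l := by
  simpa using sum_range_choose_mul_choose_mul_choose k l 0

lemma sum_range_choose_mul_choose_mul_choose_add (k l : ℕ) :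
    ∑ j ∈ range (l + 1), k.choose j * l.choose j * (k + l + j).choose j =
      (k + l).choose l ^ 2 := by
  have expand : ∀ j ∈ range (l + 1), k.choose j * l.choose j * (k + l + j).choose j =
      ∑ i ∈ range (l + 1), (k + l).choose i * (k.choose j * l.choose j * j.choose i) := by
    intro j hj
    rw [← sum_range_choose_mul_choose, mul_sum,
      sum_subset (range_mono (show j + 1 ≤ l + 1 by grind)) fun i _ hi ↦ by
        rw [Nat.choose_eq_zero_of_lt (by grind : j < i), mul_zero, mul_zero]]
    exact sum_congr rfl fun i _ ↦ by ring
  have exchange : ∀ i, (k + l).choose i * (l.choose i * (k + l - i).choose l) =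
      (k + l).choose l * (k.choose i * l.choose i) := by
    intro i
    have h₁ := Nat.choose_mul (n := k + l) (Nat.le_add_left i l)
    have h₂ := Nat.choose_mul (n := k + l) (Nat.le_add_right l i)
    rw [Nat.add_sub_cancel, Nat.choose_symm_add.symm] at h₁
    rw [Nat.add_sub_cancel_left, Nat.add_sub_cancel, h₁] at h₂
    rw [mul_left_comm, h₂]
    ring
  rw [sum_congr rfl expand, sum_comm]
  simp_rw [← mul_sum, sum_range_choose_mul_choose_mul_choose, exchange, ← mul_sum,
    sum_range_choose_mul_choose, sq]

-- With `F = ∑ C(2k,k) C(k,j) x^k = C(2j,j) x^j (1 - 4x)^{-j-1/2}`, this is the coefficientwise form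
-- of the first-order differential equation satisfied by `F²`.
lemma sum_antidiagonal_succ_centralBinom_mul_choose (j m : ℕ) :
    ((m : ℤ) + 1 - 2 * j) * ∑ x ∈ antidiagonal (m + 1),
      ((x.1.centralBinom * x.1.choose j : ℕ) : ℤ) * (x.2.centralBinom * x.2.choose j : ℕ) =
    4 * (m + 1) * ∑ x ∈ antidiagonal m,
      ((x.1.centralBinom * x.1.choose j : ℕ) : ℤ) * (x.2.centralBinom * x.2.choose j : ℕ) := by
  set a : ℕ → ℤ := fun k ↦ (k.centralBinom * k.choose j : ℕ) with ha
  have a_zero : ((0 : ℕ) - j : ℤ) * a 0 = 0 := by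
    cases j <;> simp [ha]
  have a_succ (k : ℕ) : ((k + 1 : ℕ) - j : ℤ) * a (k + 1) = 2 * (2 * k + 1) * a k := by
    have h₁ := succ_mul_cast_centralBinom_succ (R := ℤ) k
    have h₂ := succ_sub_mul_cast_succ_choose (R := ℤ) k j
    simp only [ha]
    push_cast
    linear_combination (k + 1).centralBinom * h₂ + k.choose j * h₁
  change _ * ∑ x ∈ antidiagonal (m + 1), a x.1 * a x.2 =
    _ * ∑ x ∈ antidiagonal m, a x.1 * a x.2
  have swap (f : ℕ → ℤ) (n : ℕ) : ∑ x ∈ antidiagonal n, f x.2 * (a x.1 * a x.2) =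
      ∑ x ∈ antidiagonal n, f x.1 * (a x.1 * a x.2) := by
    rw [← Nat.sum_antidiagonal_swap]
    exact sum_congr rfl fun x _ ↦ by simp [mul_comm]
  calc
    _ = ∑ x ∈ antidiagonal (m + 1), ((x.1 : ℤ) - j) * (a x.1 * a x.2) +
        ∑ x ∈ antidiagonal (m + 1), ((x.2 : ℤ) - j) * (a x.1 * a x.2) := by
      rw [← sum_add_distrib, mul_sum]
      refine sum_congr rfl fun x hx ↦ ?_
      have : (x.1 : ℤ) + x.2 = m + 1 := by exact_mod_cast HasAntidiagonal.mem_antidiagonal.1 hx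
      linear_combination (-(a x.1 * a x.2)) * this
    _ = 2 * ∑ x ∈ antidiagonal m, 2 * (2 * (x.1 : ℤ) + 1) * (a x.1 * a x.2) := by
      rw [swap fun k ↦ (k : ℤ) - j, ← two_mul, Nat.sum_antidiagonal_succ]
      simp_rw [← mul_assoc, a_succ, a_zero]
      simp
    _ = ∑ x ∈ antidiagonal m, 2 * (2 * (x.1 : ℤ) + 1) * (a x.1 * a x.2) +
        ∑ x ∈ antidiagonal m, 2 * (2 * (x.2 : ℤ) + 1) * (a x.1 * a x.2) := by
      rw [swap fun k ↦ 2 * (2 * (k : ℤ) + 1), two_mul]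
    _ = _ := by
      rw [← sum_add_distrib, mul_sum]
      refine sum_congr rfl fun x hx ↦ ?_
      have : (x.1 : ℤ) + x.2 = m := by exact_mod_cast HasAntidiagonal.mem_antidiagonal.1 hx
      linear_combination (4 * (a x.1 * a x.2)) * this

lemma sum_antidiagonal_centralBinom_mul_choose (j m : ℕ) :
    ∑ x ∈ antidiagonal m,
      (x.1.centralBinom * x.1.choose j) * (x.2.centralBinom * x.2.choose j) =
    j.centralBinom ^ 2 * m.choose (2 * j) * 4 ^ (m - 2 * j) := by
  have vanish {x : ℕ × ℕ} (hx : x.1 < j ∨ x.2 < j) :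
      (x.1.centralBinom * x.1.choose j) * (x.2.centralBinom * x.2.choose j) = 0 := by
    rcases hx with hx | hx <;> simp [Nat.choose_eq_zero_of_lt hx]
  rcases lt_or_ge m (2 * j) with hm | hm
  · rw [Nat.choose_eq_zero_of_lt hm, mul_zero, zero_mul]
    exact sum_eq_zero fun x hx ↦ vanish (by rw [HasAntidiagonal.mem_antidiagonal] at hx; omega)
  induction m, hm using Nat.le_induction with
  | base =>
    rw [sum_eq_single (j, j) (fun x hx hne ↦ vanish ?_) (by simp [two_mul])]
    · simp [sq]
    · rw [HasAntidiagonal.mem_antidiagonal] at hx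
      by_contra! h
      exact hne (Prod.ext (by omega) (by omega))
  | succ m hm ih =>
    have hrec := sum_antidiagonal_succ_centralBinom_mul_choose j m
    have hchoose := succ_sub_mul_cast_succ_choose (R := ℤ) m (2 * j)
    have hne : (m + 1 - 2 * j : ℤ) ≠ 0 := by omega
    rw [← Nat.cast_inj (R := ℤ)] at ih ⊢
    push_cast at hrec hchoose ih ⊢
    refine mul_left_cancel₀ hne ?_
    rw [hrec, ih, Nat.sub_add_comm hm, pow_succ]
    linear_combination (-(4 * j.centralBinom ^ 2 * 4 ^ (m - 2 * j)) : ℤ) * hchoose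

lemma A_eq_sum (n : ℕ) :
    A n = ∑ j ∈ range (n + 1),
      (n + j).choose (3 * j) * (3 * j).choose j * j.centralBinom ^ 2 * 4 ^ (n - 2 * j) := by
  have term (x : ℕ × ℕ) (hx : x ∈ antidiagonal n) :
      (2 * x.1).choose x.1 * (2 * n - 2 * x.1).choose (n - x.1) * n.choose x.1 ^ 2 =
      ∑ j ∈ range (n + 1), (n + j).choose j *
        ((x.1.centralBinom * x.1.choose j) * (x.2.centralBinom * x.2.choose j)) := by
    rw [HasAntidiagonal.mem_antidiagonal] at hx
    obtain rfl := hx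
    have hsub : 2 * (x.1 + x.2) - 2 * x.1 = 2 * x.2 := by omega
    have hext : ∑ j ∈ range (x.2 + 1),
        x.1.choose j * x.2.choose j * (x.1 + x.2 + j).choose j =
        ∑ j ∈ range (x.1 + x.2 + 1), x.1.choose j * x.2.choose j * (x.1 + x.2 + j).choose j :=
      sum_subset (range_mono (by omega)) fun j _ hj ↦ by
        rw [Nat.choose_eq_zero_of_lt (by grind : x.2 < j), mul_zero, zero_mul]
    rw [hsub, Nat.add_sub_cancel_left, Nat.choose_symm_add,
      ← sum_range_choose_mul_choose_mul_choose_add, hext, mul_sum]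
    exact sum_congr rfl fun j _ ↦ by simp only [Nat.centralBinom]; ring
  have trinomial (j : ℕ) : (n + j).choose j * n.choose (2 * j) =
      (n + j).choose (3 * j) * (3 * j).choose j := by
    rw [Nat.choose_mul (by omega), Nat.add_sub_cancel, show 3 * j - j = 2 * j by omega]
  calc
    A n = ∑ x ∈ antidiagonal n, (2 * x.1).choose x.1 * (2 * n - 2 * x.1).choose (n - x.1) *
        n.choose x.1 ^ 2 := by
      rw [Nat.sum_antidiagonal_eq_sum_range_succ_mk, A]
    _ = _ := by
      rw [sum_congr rfl term, sum_comm]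
      refine sum_congr rfl fun j _ ↦ ?_
      rw [← mul_sum, sum_antidiagonal_centralBinom_mul_choose]
      linear_combination j.centralBinom ^ 2 * 4 ^ (n - 2 * j) * trinomial j

variable {K : Type*} [Field K] {p : ℕ} [CharP K p] [Fact p.Prime]

lemma sum_range_choose_add_div_two_pow (hp : p ≠ 2) {j : ℕ} (hj : 3 * j < p) :
    ∑ m ∈ range p, ((m + j).choose (3 * j) : K) / 2 ^ m = 2 ^ j := by
  have two_ne_zero : (2 : K) ≠ 0 := two_ne_zero_of_char_ne_two hp
  obtain ⟨b, hb⟩ : ∃ b, p = 2 * j + (b + j + 1) := ⟨p - 3 * j - 1, by omega⟩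
  have fermat : (2 : K) ^ (b + 3 * j) = 1 := by
    have h := natCast_pow_char_sub_one (K := K) (p := p) (a := 2) (by exact_mod_cast two_ne_zero)
    rwa [show p - 1 = b + 3 * j by omega, Nat.cast_ofNat] at h
  have reflect (i : ℕ) (hi : i ∈ range (b + j + 1)) :
      ((2 * j + i + j).choose (3 * j) : K) / 2 ^ (2 * j + i) =
        (b.choose i * (-1 / 2) ^ i) / 2 ^ (2 * j) := by
    rw [cast_choose_eq_neg_one_pow_mul_choose_add (a := 3 * j) (by omega) (by grind : i < p),
      show 2 * j + i + j = 3 * j + i by omega, Nat.choose_symm_add, div_pow, pow_add]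
    field_simp
    rw [← pow_mul, mul_comm i, pow_mul, neg_one_sq, one_pow, mul_one]
  have binomial : ∑ i ∈ range (b + j + 1), (b.choose i * (-1 / 2) ^ i : K) = (1 / 2) ^ b := by
    rw [← sum_subset (range_mono (by omega : b + 1 ≤ b + j + 1)) fun i _ hi ↦ by
      rw [Nat.choose_eq_zero_of_lt (by grind), Nat.cast_zero, zero_mul],
      show (1 / 2 : K) = -1 / 2 + 1 by grind, add_pow]
    exact sum_congr rfl fun i _ ↦ by rw [one_pow, mul_one, mul_comm]
  rw [hb, sum_range_add, sum_eq_zero fun m hm ↦ by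
    rw [Nat.choose_eq_zero_of_lt (by grind), Nat.cast_zero, zero_div], zero_add,
    sum_congr rfl reflect, ← sum_div, binomial, div_pow, one_pow, div_div,
    div_eq_iff (by simp [two_ne_zero]), ← fermat]
  ring

theorem sum_cast_A_div_eight_pow (hp : p ≠ 2) :
    ∑ n ∈ range p, (A n : K) / 8 ^ n =
      ∑ j ∈ range p, ((3 * j).choose j * j.centralBinom ^ 2 : K) / 8 ^ j := by
  have two_ne_zero : (2 : K) ≠ 0 := two_ne_zero_of_char_ne_two hp
  have four_pow (m : ℕ) : (4 : K) ^ m = 2 ^ (2 * m) := by rw [pow_mul]; norm_num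
  have eight_pow (m : ℕ) : (8 : K) ^ m = 2 ^ (3 * m) := by rw [pow_mul]; norm_num
  have separate (m j : ℕ) : ((m + j).choose (3 * j) * (3 * j).choose j * j.centralBinom ^ 2 *
      4 ^ (m - 2 * j) : K) / 8 ^ m =
      (3 * j).choose j * j.centralBinom ^ 2 / 2 ^ (4 * j) *
        ((m + j).choose (3 * j) / 2 ^ m) := by
    rcases lt_or_ge m (2 * j) with hm | hm
    · simp [Nat.choose_eq_zero_of_lt (show m + j < 3 * j by omega)]
    obtain ⟨i, rfl⟩ := Nat.exists_eq_add_of_le hm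
    rw [Nat.add_sub_cancel_left, four_pow, eight_pow]
    field_simp
    ring
  calc
    _ = ∑ m ∈ range p, ∑ j ∈ range p, (3 * j).choose j * (j.centralBinom : K) ^ 2 / 2 ^ (4 * j) *
        ((m + j).choose (3 * j) / 2 ^ m) := by
      refine sum_congr rfl fun m hm ↦ ?_
      rw [A_eq_sum, sum_subset (range_mono (by grind : m + 1 ≤ p)) fun j _ hj ↦ by
        rw [Nat.choose_eq_zero_of_lt (by grind : m + j < 3 * j)]; simp]
      push_cast
      rw [sum_div]
      exact sum_congr rfl fun j _ ↦ separate m j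
    _ = _ := by
      rw [sum_comm]
      refine sum_congr rfl fun j hj ↦ ?_
      rw [← mul_sum]
      rcases lt_or_ge (3 * j) p with h | h
      · rw [sum_range_choose_add_div_two_pow hp h, eight_pow]
        field_simp
        ring
      · have hzero := cast_choose_three_mul_mul_centralBinom_eq_zero (K := K) (mem_range.1 hj) h
        rw [sq, ← mul_assoc, hzero]
        simp

end DombNumbers

section Clausen

open Polynomial

/-- The operator `g ↦ (q ((q g')' + 2ν g))' + 2ν q g'` with `q = x (1 - x)`. It is the symmetric
square of the Legendre operator `y ↦ (q y')' + ν y`: it annihilates the squares of the solutions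
of the latter. -/
noncomputable def legendreSymmSquare {R : Type*} [CommRing R] (ν : R) : R[X] →ₗ[R] R[X] where
  toFun g :=
    derivative (X * (1 - X) * (derivative (X * (1 - X) * derivative g) + C (2 * ν) * g)) +
      C (2 * ν) * (X * (1 - X) * derivative g)
  map_add' g h := by
    simp only [map_add, mul_add]
    ring
  map_smul' c g := by
    simp only [smul_eq_C_mul, derivative_C_mul, RingHom.id_apply, mul_left_comm _ (C c),
      ← mul_add]

lemma legendreSymmSquare_apply {R : Type*} [CommRing R] (ν : R) (g : R[X]) :
    legendreSymmSquare ν g =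
      derivative (X * (1 - X) * (derivative (X * (1 - X) * derivative g) + C (2 * ν) * g)) +
        C (2 * ν) * (X * (1 - X) * derivative g) := rfl

lemma legendreSymmSquare_sq {R : Type*} [CommRing R] {ν : R} {f : R[X]}
    (hf : derivative (X * (1 - X) * derivative f) = -C ν * f) :
    legendreSymmSquare ν (f ^ 2) = 0 := by
  have hinner : X * (1 - X) * (derivative (X * (1 - X) * derivative (f ^ 2)) +
      C (2 * ν) * f ^ 2) = 2 * (X * (1 - X) * derivative f) ^ 2 := by
    rw [show X * (1 - X) * derivative (f ^ 2) = 2 * f * (X * (1 - X) * derivative f) by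
      rw [derivative_sq, C_ofNat]; ring, derivative_mul, hf]
    simp only [derivative_mul, derivative_ofNat, C_mul, C_ofNat]
    ring
  rw [legendreSymmSquare_apply, hinner, derivative_mul, derivative_sq, hf, derivative_sq]
  simp only [derivative_ofNat, C_mul, C_ofNat]
  ring

lemma derivative_X_mul_one_sub_X_pow {R : Type*} [CommRing R] (k : ℕ) :
    derivative ((X * (1 - X) : R[X]) ^ (k + 1)) =
      ((k : R[X]) + 1) * (X * (1 - X)) ^ k * (1 - 2 * X) := by
  simp only [derivative_pow_succ, derivative_mul, derivative_X, derivative_sub, derivative_one,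
    C_add, C_1, C_eq_natCast]
  ring

lemma legendreSymmSquare_X_mul_one_sub_X_pow {R : Type*} [CommRing R] (ν : R) (k : ℕ) :
    legendreSymmSquare ν ((X * (1 - X)) ^ (k + 1)) = (1 - 2 * X) *
      (((k : R[X]) + 1) ^ 3 * (X * (1 - X)) ^ k +
        2 * (2 * (k : R[X]) + 3) * (C ν - ((k : R[X]) + 1) * ((k : R[X]) + 2)) *
          (X * (1 - X)) ^ (k + 1)) := by
  have hinner : X * (1 - X) * (derivative (X * (1 - X) * derivative ((X * (1 - X)) ^ (k + 1))) +
      C (2 * ν) * (X * (1 - X)) ^ (k + 1)) =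
      C (((k + 1 : ℕ) : R) ^ 2) * (X * (1 - X)) ^ (k + 1) +
        C (2 * ν - 2 * (k + 1 : ℕ) * (2 * k + 3 : ℕ)) * (X * (1 - X)) ^ (k + 1 + 1) := by
    rw [show X * (1 - X) * derivative ((X * (1 - X) : R[X]) ^ (k + 1)) =
      C ((k + 1 : ℕ) : R) * ((X * (1 - X)) ^ (k + 1) * (1 - 2 * X)) by
        rw [derivative_X_mul_one_sub_X_pow, C_eq_natCast]; push_cast; ring,
      derivative_C_mul, derivative_mul, derivative_X_mul_one_sub_X_pow]
    simp only [derivative_sub, derivative_one, derivative_mul, derivative_ofNat, derivative_X,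
      C_sub, C_mul, C_pow, C_ofNat, C_eq_natCast]
    push_cast
    ring
  rw [legendreSymmSquare_apply, hinner, map_add, derivative_C_mul, derivative_C_mul,
    derivative_X_mul_one_sub_X_pow, derivative_X_mul_one_sub_X_pow]
  simp only [C_sub, C_mul, C_pow, C_ofNat, C_eq_natCast]
  push_cast
  ring

lemma exists_legendreSymmSquare_X_pow_mul {R : Type*} [CommRing R] (ν : R) (m : ℕ) (h : R[X]) :
    ∃ h' : R[X], legendreSymmSquare ν (X ^ (m + 1) * h) = X ^ m * h' ∧
      h'.eval 0 = (m + 1) ^ 3 * h.eval 0 := by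
  have step (h : R[X]) : ∃ k : R[X], derivative (X ^ (m + 1) * h) = X ^ m * k ∧
      k.eval 0 = (m + 1) * h.eval 0 := by
    refine ⟨((m : R[X]) + 1) * h + X * derivative h, ?_, by simp⟩
    rw [derivative_mul, derivative_X_pow_succ]
    simp only [map_add, map_natCast, map_one]
    ring
  obtain ⟨h₁, hh₁, hv₁⟩ := step h
  obtain ⟨h₂, hh₂, hv₂⟩ := step ((1 - X) * h₁)
  obtain ⟨h₃, hh₃, hv₃⟩ := step ((1 - X) * (h₂ + C (2 * ν) * X * h))
  refine ⟨h₃ + C (2 * ν) * X * (1 - X) * h₁, ?_, ?_⟩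
  · rw [mul_add, ← hh₃, legendreSymmSquare_apply, hh₁,
      show X * (1 - X) * (X ^ m * h₁) = X ^ (m + 1) * ((1 - X) * h₁) by ring, hh₂]
    ring_nf
  · simp only [eval_add, eval_mul, eval_sub, eval_one, eval_X, eval_C, hv₁, hv₂, hv₃]
    ring

lemma eq_zero_of_legendreSymmSquare_eq_zero {R : Type*} [CommRing R] [IsDomain R] [CharZero R]
    {ν : R} {g : R[X]} (hg : legendreSymmSquare ν g = 0) (hg₀ : g.eval 0 = 0) : g = 0 := by
  by_contra hne
  obtain ⟨h, hgh, hh⟩ := exists_eq_pow_rootMultiplicity_mul_and_not_dvd g hne 0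
  obtain ⟨m, hm⟩ := Nat.exists_eq_succ_of_ne_zero
    ((rootMultiplicity_pos hne).2 hg₀).ne'
  rw [hm, C_0, sub_zero] at hgh
  obtain ⟨h', hh', hv⟩ := exists_legendreSymmSquare_X_pow_mul ν m h
  rw [← hgh, hg, zero_eq_mul, or_iff_right (pow_ne_zero m X_ne_zero)] at hh'
  rw [hh', eval_zero, zero_eq_mul, or_iff_right (pow_ne_zero 3 m.cast_add_one_ne_zero)] at hv
  exact hh (dvd_iff_isRoot.2 hv)

lemma coeff_shiftedLegendre_succ (n k : ℕ) :
    ((k : ℤ) + 1) ^ 2 * (shiftedLegendre n).coeff (k + 1) =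
      (k * (k + 1) - n * (n + 1)) * (shiftedLegendre n).coeff k := by
  have h₁ := succ_mul_cast_choose_succ (R := ℤ) n k
  have h₂ := succ_mul_cast_choose_add_succ (R := ℤ) n k
  rw [← Nat.choose_symm_add, ← Nat.choose_symm_add] at h₂
  simp only [coeff_shiftedLegendre, pow_succ]
  linear_combination (-(-1) ^ k * ((k + 1) * (n + (k + 1)).choose n) : ℤ) * h₁ -
    (-1) ^ k * ((n - k) * n.choose k) * h₂

lemma derivative_shiftedLegendre (n : ℕ) :
    derivative (X * (1 - X) * derivative (shiftedLegendre n)) =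
      -C ((n : ℤ) * (n + 1)) * shiftedLegendre n := by
  have hcoeff (k : ℕ) : (X * (1 - X) * derivative (shiftedLegendre n)).coeff (k + 1) =
      (k + 1) * (shiftedLegendre n).coeff (k + 1) - k * (shiftedLegendre n).coeff k := by
    rw [mul_assoc, coeff_X_mul, sub_mul, one_mul, coeff_sub, coeff_derivative]
    cases k with
    | zero => simp
    | succ k =>
      rw [coeff_X_mul, coeff_derivative]
      push_cast
      ring
  ext k
  rw [coeff_derivative, hcoeff, neg_mul, coeff_neg, coeff_C_mul]
  linear_combination coeff_shiftedLegendre_succ n k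

theorem shiftedLegendre_sq (n : ℕ) :
    shiftedLegendre n ^ 2 = ∑ k ∈ range (n + 1),
      C ((shiftedLegendre n).coeff k * k.centralBinom) * (X * (1 - X)) ^ k := by
  set ν : ℤ := n * (n + 1)
  set c : ℕ → ℤ := fun k ↦ (shiftedLegendre n).coeff k * k.centralBinom with hc
  have c_succ (k : ℕ) : ((k : ℤ) + 1) ^ 3 * c (k + 1) =
      -2 * (2 * k + 1) * (ν - k * (k + 1)) * c k := by
    have h₁ := coeff_shiftedLegendre_succ n k
    have h₂ := succ_mul_cast_centralBinom_succ (R := ℤ) k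
    simp only [hc]
    linear_combination ((k + 1) * (k + 1).centralBinom : ℤ) * h₁ +
      (k * (k + 1) - n * (n + 1) : ℤ) * (shiftedLegendre n).coeff k * h₂
  have telescope (N : ℕ) :
      legendreSymmSquare ν (∑ k ∈ range (N + 1), C (c k) * (X * (1 - X)) ^ k) =
        C (2 * (2 * N + 1) * (ν - N * (N + 1)) * c N) * ((1 - 2 * X) * (X * (1 - X)) ^ N) := by
    induction N with
    | zero =>
      simp only [zero_add, sum_range_one, pow_zero, mul_one, legendreSymmSquare_apply,
        derivative_C, derivative_mul, derivative_X, derivative_sub, derivative_one, map_mul,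
        map_ofNat]
      simp only [mul_zero, add_zero, zero_add, zero_sub, zero_mul, one_mul, mul_one, mul_neg,
        sub_zero, derivative_mul, derivative_zero, derivative_ofNat, derivative_intCast, eq_intCast,
        Nat.cast_zero, Int.cast_one]
      ring
    | succ N ih =>
      rw [sum_range_succ, map_add, ih, ← smul_eq_C_mul (c _), LinearMap.map_smul,
        legendreSymmSquare_X_mul_one_sub_X_pow, smul_eq_C_mul]
      have := congrArg (C : ℤ → ℤ[X]) (c_succ N)
      simp only [map_mul, map_add, map_pow, map_sub, map_neg, map_natCast, map_ofNat,
        map_one] at this ⊢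
      push_cast
      linear_combination (1 - 2 * X) * (X * (1 - X)) ^ N * this
  refine sub_eq_zero.1 (eq_zero_of_legendreSymmSquare_eq_zero (ν := ν) ?_ ?_)
  · rw [map_sub, legendreSymmSquare_sq (derivative_shiftedLegendre n), telescope, sub_self]
    simp
  · rw [sum_range_succ']
    simp [eval_finsetSum, ← coeff_zero_eq_eval_zero, coeff_shiftedLegendre]

lemma aeval_shiftedLegendre {R : Type*} [CommRing R] (n : ℕ) (x : R) :
    aeval x (shiftedLegendre n) =
      ∑ k ∈ range (n + 1), (n.choose k * (n + k).choose k : R) * (-x) ^ k := by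
  rw [aeval_eq_sum_range, natDegree_shiftedLegendre]
  refine sum_congr rfl fun k _ ↦ ?_
  rw [coeff_shiftedLegendre, zsmul_eq_mul, Nat.choose_symm_add, neg_pow x]
  push_cast
  ring

lemma aeval_shiftedLegendre_sq {R : Type*} [CommRing R] (n : ℕ) (x : R) :
    aeval x (shiftedLegendre n) ^ 2 = ∑ k ∈ range (n + 1),
      (n.choose k * (n + k).choose k * k.centralBinom : R) * (-(x * (1 - x))) ^ k := by
  rw [← map_pow, shiftedLegendre_sq, map_sum]
  refine sum_congr rfl fun k _ ↦ ?_
  rw [coeff_shiftedLegendre, Nat.choose_symm_add, neg_pow (x * (1 - x))]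
  simp only [map_mul, map_pow, map_sub, map_one, aeval_X, map_neg, map_natCast]
  ring

lemma aeval_shiftedLegendre_eq_coeff {R : Type*} [CommRing R] (n : ℕ) (x : R) :
    aeval x (shiftedLegendre n) = (((1 + X) * (1 - C x * (1 + X))) ^ n : R[X]).coeff n := by
  rw [aeval_shiftedLegendre, mul_pow, sub_eq_neg_add, add_pow (-_), mul_sum, finsetSum_coeff]
  refine sum_congr rfl fun k _ ↦ ?_
  have hterm : (1 + X) ^ n * ((-(C x * (1 + X))) ^ k * 1 ^ (n - k) * (n.choose k : R[X])) =
      C ((-x) ^ k * n.choose k) * (1 + X) ^ (n + k) := by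
    rw [neg_pow, mul_pow, C_mul, C_pow, C_neg, neg_pow (C x), C_eq_natCast]
    ring
  rw [hterm, coeff_C_mul, coeff_one_add_X_pow, Nat.choose_symm_add]
  ring

lemma aeval_half_shiftedLegendre_of_odd {K : Type*} [Field K] (h₂ : (2 : K) ≠ 0) {n : ℕ}
    (hn : Odd n) : aeval (1 / 2 : K) (shiftedLegendre n) = 0 := by
  have h := shiftedLegendre_eval_symm n (1 / 2 : K)
  rw [hn.neg_one_pow, show (1 - 1 / 2 : K) = 1 / 2 by field_simp; ring] at h
  exact (mul_eq_zero_iff_left h₂).1 (by linear_combination h)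

lemma aeval_half_shiftedLegendre_two_mul {K : Type*} [Field K] (h₂ : (2 : K) ≠ 0) (k : ℕ) :
    aeval (1 / 2 : K) (shiftedLegendre (2 * k)) = k.centralBinom / (-4) ^ k := by
  have half_mul_two : (C (1 / 2) * 2 : K[X]) = 1 := by
    rw [← C_ofNat, ← C_mul, one_div_mul_cancel h₂, C_1]
  have hquad : ((1 + X) * (1 - C (1 / 2) * (1 + X)) : K[X]) ^ (2 * k) =
      C ((1 / 2) ^ (2 * k)) * expand K 2 ((X + C (-1)) ^ (2 * k)) := by
    rw [C_pow, map_pow, ← mul_pow, ← Even.neg_pow (even_two_mul k)]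
    congr 1
    simp only [map_add, expand_X, map_neg, map_one]
    linear_combination (1 + X) * half_mul_two
  have hquarter : (1 / 2 : K) ^ 2 * -1 = (-4)⁻¹ := by
    rw [show (-4 : K) = -(2 ^ 2) by norm_num, inv_neg, one_div, inv_pow, mul_neg_one]
  rw [aeval_shiftedLegendre_eq_coeff, hquad, coeff_C_mul, coeff_expand_mul' two_pos,
    coeff_X_add_C_pow, show 2 * k - k = k by omega, pow_mul, ← mul_assoc, ← mul_pow, hquarter,
    inv_pow, div_eq_inv_mul, Nat.centralBinom]

end Clausen

section TruncatedHypergeometric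

open Polynomial

variable {K : Type*} [Field K] {p : ℕ} [CharP K p]

lemma eq_choose_mul_choose_add_of_recurrence {a : ℕ → K} {c : K} {m : ℕ} (ha₀ : a 0 = 1)
    (ha : ∀ j : ℕ, ((j : K) + 1) ^ 2 * a (j + 1) = c * (j * (j + 1) - m * (m + 1)) * a j)
    {j : ℕ} (hj : j < p) : a j = m.choose j * (m + j).choose j * (-c) ^ j := by
  induction j with
  | zero => simpa using ha₀
  | succ j ih =>
    refine mul_left_cancel₀ (pow_ne_zero 2 (cast_add_one_ne_zero_of_lt (K := K) hj)) ?_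
    have h₁ := succ_mul_cast_choose_succ (R := K) m j
    have h₂ := succ_mul_cast_choose_add_succ (R := K) m j
    rw [ha, ih (by omega), pow_succ]
    linear_combination c * (-c) ^ j * ((j + 1) * (m + (j + 1)).choose (j + 1)) * h₁ +
      c * (-c) ^ j * ((m - j) * m.choose j) * h₂

lemma sum_range_mul_pow_eq_aeval_shiftedLegendre {a : ℕ → K} {c : K} {m : ℕ} (ha₀ : a 0 = 1)
    (ha : ∀ j : ℕ, ((j : K) + 1) ^ 2 * a (j + 1) = c * (j * (j + 1) - m * (m + 1)) * a j)
    (hm : m < p) (x : K) :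
    ∑ j ∈ range p, a j * x ^ j = aeval (c * x) (shiftedLegendre m) := by
  rw [aeval_shiftedLegendre, sum_subset (range_mono (show m + 1 ≤ p from hm)) fun j _ hj ↦ by
    rw [Nat.choose_eq_zero_of_lt (by grind)]; simp]
  refine sum_congr rfl fun j hj ↦ ?_
  rw [eq_choose_mul_choose_add_of_recurrence ha₀ ha (mem_range.1 hj), ← neg_mul, mul_pow]
  ring

lemma sum_range_mul_centralBinom_mul_pow_eq_sq {a : ℕ → K} {c : K} {m : ℕ} (ha₀ : a 0 = 1)
    (ha : ∀ j : ℕ, ((j : K) + 1) ^ 2 * a (j + 1) = c * (j * (j + 1) - m * (m + 1)) * a j)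
    (hm : m < p) (y : K) :
    ∑ j ∈ range p, a j * j.centralBinom * (y * (1 - c * y)) ^ j =
      (∑ j ∈ range p, a j * y ^ j) ^ 2 := by
  rw [sum_range_mul_pow_eq_aeval_shiftedLegendre ha₀ ha hm, aeval_shiftedLegendre_sq,
    sum_subset (range_mono (show m + 1 ≤ p from hm)) fun j _ hj ↦ by
      rw [Nat.choose_eq_zero_of_lt (by grind)]; simp]
  refine sum_congr rfl fun j hj ↦ ?_
  rw [eq_choose_mul_choose_add_of_recurrence ha₀ ha (mem_range.1 hj),
    show -(c * y * (1 - c * y)) = -c * (y * (1 - c * y)) by ring, mul_pow (-c)]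
  ring

lemma succ_sq_mul_cast_choose_three_mul_succ {R : Type*} [CommRing R] (j : ℕ) :
    ((j : R) + 1) ^ 2 * ((3 * (j + 1)).choose (j + 1) * (j + 1).centralBinom) =
      3 * (3 * j + 1) * (3 * j + 2) * ((3 * j).choose j * j.centralBinom) := by
  have hfac : (3 * (j + 1)).factorial =
      (3 * j + 3) * (3 * j + 2) * (3 * j + 1) * (3 * j).factorial := by
    simp only [mul_add, mul_one, Nat.factorial_succ]
    ring
  have hnat : (j + 1) ^ 2 * ((3 * (j + 1)).choose (j + 1) * (j + 1).centralBinom) =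
      3 * (3 * j + 1) * (3 * j + 2) * ((3 * j).choose j * j.centralBinom) := by
    rw [factorial_three_mul, factorial_three_mul, Nat.factorial_succ] at hfac
    refine Nat.eq_of_mul_eq_mul_right
      (Nat.mul_pos j.succ_pos (pow_pos j.factorial_pos 3)) ?_
    rw [Nat.succ_eq_add_one]
    linear_combination hfac
  exact_mod_cast congrArg (Nat.cast : ℕ → R) hnat

lemma succ_sq_mul_cast_centralBinom_two_mul_succ {R : Type*} [CommRing R] (j : ℕ) :
    ((j : R) + 1) ^ 2 * ((2 * (j + 1)).centralBinom * (j + 1).centralBinom) =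
      4 * (4 * j + 1) * (4 * j + 3) * ((2 * j).centralBinom * j.centralBinom) := by
  have hnat : (j + 1) ^ 2 * ((2 * (j + 1)).centralBinom * (j + 1).centralBinom) =
      4 * (4 * j + 1) * (4 * j + 3) * ((2 * j).centralBinom * j.centralBinom) := by
    have h₁ := Nat.succ_mul_centralBinom_succ (2 * j)
    have h₂ := Nat.succ_mul_centralBinom_succ (2 * j + 1)
    have h₃ := Nat.succ_mul_centralBinom_succ j
    refine Nat.eq_of_mul_eq_mul_left zero_lt_two ?_
    linear_combination ((j + 1) * (j + 1).centralBinom) * h₂ +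
      2 * (4 * j + 3) * (2 * j + 1).centralBinom * h₃ +
      4 * (4 * j + 3) * j.centralBinom * h₁
  exact_mod_cast congrArg (Nat.cast : ℕ → R) hnat

lemma nine_mul_div_three_mul_succ {R : Type*} [CommRing R] {p : ℕ} [CharP R p] (hp : p % 3 ≠ 0) :
    (9 * ((p / 3 : ℕ) * ((p / 3 : ℕ) + 1)) : R) = -2 := by
  have hcast := CharP.cast_eq_zero R p
  rcases (by omega : p = 3 * (p / 3) + 1 ∨ p = 3 * (p / 3) + 2) with h | h <;>
  · rw [h] at hcast
    push_cast at hcast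
    grind

lemma sixteen_mul_div_four_mul_succ {R : Type*} [CommRing R] {p : ℕ} [CharP R p] (hp : Odd p) :
    (16 * ((p / 4 : ℕ) * ((p / 4 : ℕ) + 1)) : R) = -3 := by
  have hcast := CharP.cast_eq_zero R p
  rcases (by grind : p = 4 * (p / 4) + 1 ∨ p = 4 * (p / 4) + 3) with h | h <;>
  · rw [h] at hcast
    push_cast at hcast
    grind

lemma sum_range_choose_three_mul_mul_centralBinom_sq (hp : p % 3 ≠ 0) (y : K) :
    ∑ j ∈ range p, ((3 * j).choose j * j.centralBinom ^ 2 : K) * (y * (1 - 27 * y)) ^ j =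
      (∑ j ∈ range p, ((3 * j).choose j * j.centralBinom : K) * y ^ j) ^ 2 := by
  rw [← sum_range_mul_centralBinom_mul_pow_eq_sq (m := p / 3) (by simp) (fun j ↦ ?_) ?_]
  · exact sum_congr rfl fun j _ ↦ by rw [sq, ← mul_assoc]
  · omega
  · rw [succ_sq_mul_cast_choose_three_mul_succ]
    linear_combination 3 * ((3 * j).choose j * j.centralBinom) *
      nine_mul_div_three_mul_succ (R := K) hp

lemma sum_range_centralBinom_two_mul_mul_centralBinom (hp : Odd p) (x : K) :
    ∑ j ∈ range p, ((2 * j).centralBinom * j.centralBinom : K) * x ^ j =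
      aeval (64 * x) (shiftedLegendre (p / 4)) := by
  refine sum_range_mul_pow_eq_aeval_shiftedLegendre (by simp) (fun j ↦ ?_) ?_ x
  · rw [succ_sq_mul_cast_centralBinom_two_mul_succ]
    linear_combination 4 * ((2 * j).centralBinom * j.centralBinom) *
      sixteen_mul_div_four_mul_succ (R := K) hp
  · grind

end TruncatedHypergeometric

section HasseInvariant

open Polynomial

variable {K : Type*} [Field K] {p : ℕ} [CharP K p]

lemma coeff_comp_X_add_C_char_sub_one [Fact p.Prime] {f : K[X]} (hf : f.natDegree ≤ 2 * p - 2)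
    (r : K) : (f.comp (X + C r)).coeff (p - 1) = f.coeff (p - 1) := by
  have hp : p.Prime := Fact.out
  have hchoose (i : ℕ) (hi : i ≤ 2 * p - 2) (hne : i ≠ p - 1) : (i.choose (p - 1) : K) = 0 := by
    rcases lt_or_gt_of_ne hne with hlt | hgt
    · rw [Nat.choose_eq_zero_of_lt hlt, Nat.cast_zero]
    · obtain ⟨j, rfl⟩ := Nat.exists_eq_add_of_le hgt.le
      exact (CharP.cast_eq_zero_iff K p _).2 (hp.dvd_choose_add (by omega) (by omega) (by omega))
  rw [← taylor_apply, taylor_coeff, hasseDeriv_apply, sum_def, eval_finsetSum,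
    Finset.sum_eq_single (p - 1)]
  · simp
  · intro i hi hne
    rw [hchoose i ((le_natDegree_of_mem_supp i hi).trans hf) hne]
    simp
  · intro h
    simp [notMem_support_iff.1 h]

lemma coeff_four_mul_X_cube_add_sq_pow {n : ℕ} (hp : p = 2 * n + 1) (x : K) :
    ((C 4 * X ^ 3 + (X + C x) ^ 2) ^ n : K[X]).coeff (2 * n) =
      ∑ j ∈ range p, ((3 * j).choose j * j.centralBinom : K) * x ^ j := by
  rw [add_pow, finsetSum_coeff, sum_subset (range_mono (show n + 1 ≤ p by omega)) fun j _ hj ↦ by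
    rw [Nat.choose_eq_zero_of_lt (by simpa using hj : n < j)]
    simp]
  refine sum_congr rfl fun j hj ↦ ?_
  rw [cast_centralBinom_eq_choose_mul_pow hp (mem_range.1 hj)]
  rcases le_or_gt j n with hjn | hjn
  · have hterm : (C 4 * X ^ 3) ^ j * ((X + C x) ^ 2) ^ (n - j) * (n.choose j : K[X]) =
        C (4 ^ j * (n.choose j : K)) * (X ^ (3 * j) * (X + C x) ^ (2 * (n - j))) := by
      rw [mul_pow, ← pow_mul, ← pow_mul, C_mul, C_pow, C_eq_natCast]
      ring
    have hcoeff : (X ^ (3 * j) * (X + C x) ^ (2 * (n - j))).coeff (2 * n) =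
        x ^ j * ((2 * (n - j)).choose j : K) := by
      rw [coeff_X_pow_mul', coeff_X_add_C_pow]
      split_ifs with h
      · rw [show 2 * (n - j) - (2 * n - 3 * j) = j by omega,
          Nat.choose_symm_of_eq_add (show 2 * (n - j) = (2 * n - 3 * j) + j by omega)]
      · rw [Nat.choose_eq_zero_of_lt (show 2 * (n - j) < j by omega), Nat.cast_zero, mul_zero]
    rw [hterm, coeff_C_mul, hcoeff, cast_choose_eq_neg_one_pow_mul_choose_add (K := K)
      (show 2 * j + 2 * (n - j) + 1 = p by omega) (mem_range.1 hj), neg_pow 4 j,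
      show 2 * j + j = 3 * j by ring]
    ring
  · simp [Nat.choose_eq_zero_of_lt hjn]

lemma coeff_X_add_C_mul_X_sq_add_C_pow {R : Type*} [CommRing R] (n : ℕ) (b c : R) :
    (((X + C b) * (X ^ 2 + C c)) ^ n : R[X]).coeff (2 * n) =
      ∑ i ∈ range (n + 1), n.choose i * n.choose (2 * i) * c ^ i * b ^ (n - 2 * i) := by
  have hexpand : (((X + C b) * (X ^ 2 + C c)) ^ n : R[X]) = ∑ i ∈ range (n + 1),
      C (c ^ i * (n.choose i : R)) * (X ^ (2 * (n - i)) * (X + C b) ^ n) := by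
    rw [mul_pow, add_comm (X ^ 2), add_pow (C c), mul_sum]
    refine sum_congr rfl fun i _ ↦ ?_
    rw [C_mul, C_pow, C_eq_natCast, ← pow_mul]
    ring
  rw [hexpand, finsetSum_coeff]
  refine sum_congr rfl fun i hi ↦ ?_
  rw [mem_range] at hi
  rw [coeff_C_mul, coeff_X_pow_mul', if_pos (by omega), coeff_X_add_C_pow,
    show 2 * n - 2 * (n - i) = 2 * i by omega]
  ring

lemma coeff_X_sub_C_mul_X_sq_sub_C_pow {n : ℕ} (hp : p = 2 * n + 1) (d : K) :
    (((X + C (-2 * d)) * (X ^ 2 + C (-2 * d ^ 2))) ^ n : K[X]).coeff (2 * n) =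
      (-2 * d) ^ n * aeval (1 / 2 : K) (shiftedLegendre (p / 4)) := by
  have h₂ : (2 : K) ≠ 0 := two_ne_zero_of_char_ne_two (p := p) (by omega)
  have hhalf : (1 / 2 : K) = 64 * (1 / 128) := by
    rw [show (128 : K) = 64 * 2 by norm_num, ← mul_div_assoc, mul_one,
      div_mul_cancel_left₀ (by rw [show (64 : K) = 2 ^ 6 by norm_num]; exact pow_ne_zero 6 h₂),
      one_div]
  have hlt {i : ℕ} (hi : i ∉ range (n + 1)) : n < i := by simpa using hi
  rw [coeff_X_add_C_mul_X_sq_add_C_pow, hhalf,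
    ← sum_range_centralBinom_two_mul_mul_centralBinom ⟨n, hp⟩,
    ← sum_subset (range_mono (show n + 1 ≤ p by omega)) fun i hi hi' ↦ by
      rw [cast_centralBinom_eq_choose_mul_pow hp (mem_range.1 hi),
        Nat.choose_eq_zero_of_lt (hlt hi')]
      simp, mul_sum]
  refine sum_congr rfl fun i hi ↦ ?_
  rw [mem_range] at hi
  rw [cast_centralBinom_eq_choose_mul_pow hp (by omega : i < p),
    cast_centralBinom_eq_choose_mul_pow hp (by omega : 2 * i < p)]
  rcases le_or_gt (2 * i) n with h | h
  · have hpow : (-2 * d ^ 2) ^ i =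
        (-2 * d) ^ (2 * i) * ((-4) ^ (2 * i) * (-4) ^ i * (1 / 128) ^ i) := by
      rw [pow_mul, pow_mul, ← mul_pow, ← mul_pow, ← mul_pow]
      congr 1
      rw [show (128 : K) = 2 ^ 7 by norm_num]
      field_simp
      ring
    rw [hpow, ← pow_sub_mul_pow (-2 * d) h]
    ring
  · simp [Nat.choose_eq_zero_of_lt h]

lemma cubic_comp_X_add_C (h₂ : (2 : K) ≠ 0) (h₃ : (3 : K) ≠ 0) {s : K} (hs : s ^ 2 = -2) :
    (C 4 * X ^ 3 + (X + C ((2 + 5 * s) / 108)) ^ 2 : K[X]).comp (X + C ((s - 5) / 36)) =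
      C 4 * ((X + C (-2 * ((2 - s) / 24))) * (X ^ 2 + C (-2 * ((2 - s) / 24) ^ 2))) := by
  obtain ⟨i, hi⟩ : ∃ i : K, 216 * i = 1 :=
    ⟨216⁻¹, mul_inv_cancel₀ (by rw [show (216 : K) = 2 ^ 3 * 3 ^ 3 by norm_num]; positivity)⟩
  have hx : (2 + 5 * s) / 108 = i * (4 + 10 * s) := by
    rw [div_eq_iff (by rw [show (108 : K) = 2 ^ 2 * 3 ^ 3 by norm_num]; positivity)]
    linear_combination -(2 + 5 * s) * hi
  have hd : (2 - s) / 24 = i * (18 - 9 * s) := by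
    rw [div_eq_iff (by rw [show (24 : K) = 2 ^ 3 * 3 by norm_num]; positivity)]
    linear_combination -(2 - s) * hi
  have hr : (s - 5) / 36 = i * (6 * s - 30) := by
    rw [div_eq_iff (by rw [show (36 : K) = 2 ^ 2 * 3 ^ 2 by norm_num]; positivity)]
    linear_combination -(s - 5) * hi
  have hCi : (216 * C i : K[X]) = 1 := by rw [← map_ofNat C 216, ← C_mul, hi, C_1]
  have hCs : (C s ^ 2 : K[X]) = -2 := by rw [← C_pow, hs, C_neg, map_ofNat]
  rw [hx, hd, hr]
  simp only [add_comp, mul_comp, pow_comp, C_comp, X_comp]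
  simp only [C_mul, C_add, C_sub, C_pow, C_neg, map_ofNat]
  generalize (C i : K[X]) = i at *
  generalize (C s : K[X]) = s at *
  linear_combination
    (1080 * i ^ 2 * X + i ^ 3 * (12528 * s - 82944) + 256 * i ^ 2) * hCs +
    (-X ^ 2 + i * (52 - 32 * s) * X + i ^ 2 * (832 * s - 164)) * hCi

lemma sum_range_choose_three_mul_mul_centralBinom_eq [Fact p.Prime] (hp : 3 < p) {s : K}
    (hs : s ^ 2 = -2) :
    ∑ j ∈ range p, ((3 * j).choose j * j.centralBinom : K) * ((2 + 5 * s) / 108) ^ j =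
      4 ^ (p / 2) * ((-2 * ((2 - s) / 24)) ^ (p / 2) *
        aeval (1 / 2 : K) (shiftedLegendre (p / 4))) := by
  obtain ⟨n, hn⟩ := (Fact.out : p.Prime).odd_of_ne_two (by omega)
  have h₂ : (2 : K) ≠ 0 := two_ne_zero_of_char_ne_two (p := p) (by omega)
  have h₃ : (3 : K) ≠ 0 := by
    exact_mod_cast cast_ne_zero_of_pos_of_lt (R := K) three_pos hp
  have hdeg : ((C 4 * X ^ 3 + (X + C ((2 + 5 * s) / 108)) ^ 2) ^ n : K[X]).natDegree
      ≤ 2 * p - 2 := by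
    have hle : (C 4 * X ^ 3 + (X + C ((2 + 5 * s) / 108)) ^ 2 : K[X]).natDegree ≤ 3 := by
      compute_degree
    have := natDegree_pow_le_of_le n hle
    omega
  have htrans := coeff_comp_X_add_C_char_sub_one hdeg ((s - 5) / 36)
  rw [show p - 1 = 2 * n by omega] at htrans
  rw [← coeff_four_mul_X_cube_add_sq_pow hn, ← htrans, pow_comp, cubic_comp_X_add_C h₂ h₃ hs,
    mul_pow, ← C_pow, coeff_C_mul, coeff_X_sub_C_mul_X_sq_sub_C_pow hn,
    show p / 2 = n by omega]

theorem sum_cast_A_div_eight_pow_eq_aeval_sq [Fact p.Prime] (hp : 3 < p) {s : K}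
    (hs : s ^ 2 = -2) :
    ∑ n ∈ range p, (A n : K) / 8 ^ n = ((2 - s) / 24) ^ (p - 1) *
      aeval (1 / 2 : K) (shiftedLegendre (p / 4)) ^ 2 := by
  have hprime : p.Prime := Fact.out
  obtain ⟨n, hn⟩ := hprime.odd_of_ne_two (by omega)
  have h₂ : (2 : K) ≠ 0 := two_ne_zero_of_char_ne_two (p := p) (by omega)
  have h₃ : (3 : K) ≠ 0 := by
    exact_mod_cast cast_ne_zero_of_pos_of_lt (R := K) three_pos hp
  have hmod : p % 3 ≠ 0 := fun h ↦ by
    have := (Nat.prime_dvd_prime_iff_eq Nat.prime_three hprime).1 (Nat.dvd_of_mod_eq_zero h)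
    omega
  have hfour : (4 : K) ^ n = 1 := by
    rw [show (4 : K) = 2 ^ 2 by norm_num, ← pow_mul, show 2 * n = p - 1 by omega]
    exact_mod_cast natCast_pow_char_sub_one (p := p) (K := K) (a := 2) (by exact_mod_cast h₂)
  have harg : (2 + 5 * s) / 108 * (1 - 27 * ((2 + 5 * s) / 108)) = 1 / 8 := by
    rw [show (108 : K) = 2 ^ 2 * 3 ^ 3 by norm_num, show (8 : K) = 2 ^ 3 by norm_num]
    field_simp
    linear_combination (-675) * hs
  have hsum : ∑ j ∈ range p, ((3 * j).choose j * j.centralBinom ^ 2 : K) / 8 ^ j =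
      (∑ j ∈ range p, ((3 * j).choose j * j.centralBinom : K) * ((2 + 5 * s) / 108) ^ j) ^ 2 := by
    rw [← sum_range_choose_three_mul_mul_centralBinom_sq hmod, harg]
    simp only [div_eq_mul_inv, one_mul, inv_pow]
  rw [sum_cast_A_div_eight_pow (by omega), hsum,
    sum_range_choose_three_mul_mul_centralBinom_eq hp hs, show p / 2 = n by omega, hfour, one_mul,
    mul_pow, ← pow_mul, mul_comm n, pow_mul, show p - 1 = 2 * n by omega, pow_mul, mul_pow,
    mul_pow ((-2) ^ 2), show (-2 : K) ^ 2 = 4 by norm_num, hfour, one_mul]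

lemma sum_cast_A_div_eight_pow_eq_zero [Fact p.Prime] (hp : p % 8 = 5 ∨ p % 8 = 7) :
    ∑ n ∈ range p, (A n : ZMod p) / 8 ^ n = 0 := by
  let L := AlgebraicClosure (ZMod p)
  have : CharP L p := charP_of_injective_algebraMap (algebraMap (ZMod p) L).injective p
  obtain ⟨s, hs⟩ := IsAlgClosed.exists_pow_nat_eq (-2 : L) two_pos
  have hsum : ∑ n ∈ range p, (A n : L) / 8 ^ n = 0 := by
    rw [sum_cast_A_div_eight_pow_eq_aeval_sq (p := p) (by omega) hs,
      aeval_half_shiftedLegendre_of_odd (two_ne_zero_of_char_ne_two (p := p) (by omega))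
        (by grind), zero_pow two_ne_zero, mul_zero]
  refine (algebraMap (ZMod p) L).injective ?_
  simpa only [map_sum, map_div₀, map_pow, map_natCast, map_ofNat, map_zero] using hsum

lemma sum_cast_A_div_eight_pow_eq_choose_sq [Fact p.Prime] (hp : 3 < p)
    (hmod : p % 8 = 1 ∨ p % 8 = 3) :
    ∑ n ∈ range p, (A n : ZMod p) / 8 ^ n = ((p / 2).choose (p / 8) : ZMod p) ^ 2 := by
  have h₂ : (2 : ZMod p) ≠ 0 := two_ne_zero_of_char_ne_two (p := p) (by omega)
  have h₃ : (3 : ZMod p) ≠ 0 := by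
    exact_mod_cast cast_ne_zero_of_pos_of_lt (R := ZMod p) three_pos hp
  obtain ⟨s, hs⟩ := (ZMod.exists_sq_eq_neg_two_iff (by omega)).2 hmod
  replace hs : s ^ 2 = -2 := by rw [sq, ← hs]
  have hd : (2 - s) / 24 ≠ 0 := fun h ↦ by
    have h24 : (24 : ZMod p) ≠ 0 := by
      rw [show (24 : ZMod p) = 2 ^ 3 * 3 by norm_num]; positivity
    have hs₂ : 2 - s = 0 := (div_eq_zero_iff.1 h).resolve_right h24
    exact mul_ne_zero h₂ h₃ (by linear_combination (2 + s) * hs₂ + hs)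
  rw [sum_cast_A_div_eight_pow_eq_aeval_sq hp hs, ZMod.pow_card_sub_one_eq_one hd, one_mul,
    show p / 4 = 2 * (p / 8) by omega, aeval_half_shiftedLegendre_two_mul h₂,
    cast_centralBinom_eq_choose_mul_pow (n := p / 2) (by omega) (by omega : p / 8 < p),
    mul_div_cancel_right₀]
  exact pow_ne_zero _ (by rw [show (-4 : ZMod p) = -2 ^ 2 by norm_num, neg_ne_zero]; positivity)

end HasseInvariant

section OcticJacobiSum

lemma exists_forall_jacobiSum_eq_sum {F : Type*} [Field F] [Fintype F] {g : Fˣ}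
    (hg : ∀ x, x ∈ Subgroup.zpowers g) :
    ∃ N : ZMod 8 → ℕ, (∀ r, N (3 * r) = N r) ∧
      ∀ (R : Type) [CommRing R] (χ : MulChar F R), χ ^ 8 = 1 →
        jacobiSum χ (χ ^ 3) = ∑ r, (N r : R) * χ g ^ r.val := by
  classical
  have hlog (t : F) : ∃ l : ℕ, t ≠ 0 → t = (g : F) ^ l := by
    rcases eq_or_ne t 0 with rfl | ht
    · exact ⟨0, fun h ↦ absurd rfl h⟩
    · obtain ⟨l, hl⟩ := mem_powers_iff_mem_zpowers.2 (hg (Units.mk0 t ht))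
      exact ⟨l, fun _ ↦ by simpa using (congrArg Units.val hl).symm⟩
  choose l hl using hlog
  have h9 : ∀ r : ZMod 8, 3 * (3 * r) = r := by decide
  set e : F → ZMod 8 := fun t ↦ ((l t + 3 * l (1 - t) : ℕ) : ZMod 8) with he
  have he_symm (t : F) : e (1 - t) = 3 * e t := by
    simp only [he, sub_sub_cancel]
    push_cast
    rw [mul_add, h9, add_comm]
  have hmem {t : F} (ht : t ∈ univ \ {0, 1}) : 1 - t ∈ univ \ {0, 1} := by
    grind
  refine ⟨fun r ↦ #{t ∈ univ \ {0, 1} | e t = r}, fun r ↦ ?_, fun R _ χ hχ ↦ ?_⟩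
  · have hmaps (r : ZMod 8) (t : F) (ht : t ∈ ({t ∈ univ \ {0, 1} | e t = r} : Finset F)) :
        1 - t ∈ ({t ∈ univ \ {0, 1} | e t = 3 * r} : Finset F) := by
      rw [mem_filter] at ht ⊢
      exact ⟨hmem ht.1, by rw [he_symm, ht.2]⟩
    exact card_nbij' (1 - ·) (1 - ·) (fun t ht ↦ h9 r ▸ hmaps (3 * r) t ht) (hmaps r)
      (fun _ _ ↦ sub_sub_cancel _ _) fun _ _ ↦ sub_sub_cancel _ _
  · have hg8 : χ g ^ 8 = 1 := by rw [← MulChar.pow_apply_coe, hχ, MulChar.one_apply_coe]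
    have hχl {t : F} (ht : t ∈ univ \ {0, 1}) : χ t = χ g ^ l t := by
      rw [← map_pow, ← hl t (by grind)]
    have hterm {t : F} (ht : t ∈ univ \ {0, 1}) :
        χ t * (χ ^ 3) (1 - t) = χ g ^ (e t).val := by
      rw [ZMod.val_natCast, ← pow_eq_pow_mod _ hg8, MulChar.pow_apply' χ three_ne_zero, hχl ht,
        hχl (hmem ht), pow_add, mul_comm 3, pow_mul]
    rw [jacobiSum_eq_sum_sdiff, sum_congr rfl fun t ↦ hterm, ← sum_fiberwise _ e]
    refine sum_congr rfl fun r _ ↦ ?_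
    rw [sum_congr rfl fun t ht ↦ by rw [(mem_filter.1 ht).2], sum_const, nsmul_eq_mul]

lemma apply_generator_pow_four_of_orderOf_eq_eight {F R : Type*} [CommMonoid F] [CommRing R]
    [IsDomain R] {g : Fˣ} (hg : ∀ x, x ∈ Subgroup.zpowers g) {χ : MulChar F R}
    (hχ : orderOf χ = 8) : χ g ^ 4 = -1 := by
  have hsq : χ g ^ 4 * χ g ^ 4 = 1 := by
    rw [← pow_add, ← MulChar.pow_apply_coe, ← MulChar.one_apply_coe (R := F) (R' := R) g,
      ← pow_orderOf_eq_one χ, hχ]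
  refine (mul_self_eq_one_iff.1 hsq).resolve_left fun h ↦ ?_
  refine pow_ne_one_of_lt_orderOf (x := χ) four_ne_zero (by omega) ((MulChar.eq_iff hg _ _).2 ?_)
  rw [MulChar.pow_apply_coe, h, MulChar.one_apply_coe]

lemma exists_forall_jacobiSum_eq_add_mul (F : Type*) [Field F] [Fintype F] :
    ∃ u v : ℤ, ∀ (R : Type) [CommRing R] [IsDomain R] (χ : MulChar F R), orderOf χ = 8 →
      ∃ s : R, s ^ 2 = -2 ∧ jacobiSum χ (χ ^ 3) = u + v * s ∧
        jacobiSum χ⁻¹ (χ⁻¹ ^ 3) = u - v * s := by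
  obtain ⟨g, hg⟩ := IsCyclic.exists_generator (α := Fˣ)
  obtain ⟨N, hN, hJ⟩ := exists_forall_jacobiSum_eq_sum hg
  have h31 : N 3 = N 1 := hN 1
  have h62 : N 6 = N 2 := hN 2
  have h75 : N 7 = N 5 := hN 5
  have key (R : Type) [CommRing R] [IsDomain R] (χ : MulChar F R) (hχ : orderOf χ = 8) :
      jacobiSum χ (χ ^ 3) =
        (N 0 - N 4 : ℤ) + (N 1 - N 5 : ℤ) * (χ g + χ g ^ 3) := by
    have hz := apply_generator_pow_four_of_orderOf_eq_eight hg hχ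
    have hsum : jacobiSum χ (χ ^ 3) = N 0 * χ g ^ 0 + N 1 * χ g ^ 1 + N 2 * χ g ^ 2
        + N 3 * χ g ^ 3 + N 4 * χ g ^ 4 + N 5 * χ g ^ 5 + N 6 * χ g ^ 6 + N 7 * χ g ^ 7 :=
      (hJ R χ (hχ ▸ pow_orderOf_eq_one χ)).trans (Fin.sum_univ_eight _)
    rw [hsum, h31, h62, h75]
    push_cast
    linear_combination (N 4 + N 5 * χ g + N 2 * χ g ^ 2 + N 5 * χ g ^ 3) * hz
  refine ⟨N 0 - N 4, N 1 - N 5, fun R _ _ χ hχ ↦ ⟨χ g + χ g ^ 3, ?_, key R χ hχ, ?_⟩⟩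
  · have hz := apply_generator_pow_four_of_orderOf_eq_eight hg hχ
    linear_combination (χ g ^ 2 + 2) * hz
  · have hz := apply_generator_pow_four_of_orderOf_eq_eight hg hχ
    have hinv : χ⁻¹ g = χ g ^ 7 := by
      rw [← MulChar.pow_apply_coe, inv_eq_of_mul_eq_one_left (a := χ ^ 7)]
      rw [← pow_succ, ← pow_orderOf_eq_one χ, hχ]
    rw [key R χ⁻¹ (by rw [orderOf_inv, hχ]), hinv]
    push_cast
    linear_combination (N 1 - N 5 : R) *
      (χ g ^ 3 + χ g * (χ g ^ 16 - χ g ^ 12 + χ g ^ 8 - χ g ^ 4 + 1)) * hz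

lemma sum_pow_eq_ite {F : Type*} [Field F] [Fintype F] {i : ℕ} (hi : i ≠ 0) :
    ∑ x : F, x ^ i = if Fintype.card F - 1 ∣ i then -1 else 0 := by
  classical
  rw [← FiniteField.sum_pow_units, ← sum_sdiff (subset_univ {0}), sum_singleton, zero_pow hi,
    add_zero]
  exact sum_bij' (fun x hx ↦ Units.mk0 x (by simpa using hx : x ≠ 0)) (fun x _ ↦ x)
    (by simp) (by simp) (by simp) (by simp) (by simp)

lemma sum_pow_mul_one_sub_pow {F : Type*} [Field F] [Fintype F] {a b c : ℕ} (ha : 0 < a)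
    (hac : a + c = Fintype.card F - 1) (hb : b < Fintype.card F - 1 + c) :
    ∑ t : F, t ^ a * (1 - t) ^ b = -((-1) ^ c * b.choose c) := by
  have hexpand (t : F) : t ^ a * (1 - t) ^ b =
      ∑ i ∈ range (b + 1), (-1) ^ i * b.choose i * t ^ (a + i) := by
    rw [sub_eq_neg_add, add_pow, mul_sum]
    refine sum_congr rfl fun i _ ↦ ?_
    rw [neg_pow, pow_add]
    ring
  have hdvd {i : ℕ} (hi : i ∈ range (b + 1)) : Fintype.card F - 1 ∣ a + i ↔ i = c := by
    rw [mem_range] at hi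
    refine ⟨fun ⟨k, hk⟩ ↦ ?_, fun h ↦ by rw [h, hac]⟩
    have hk1 : k = 1 := by nlinarith
    rw [hk1] at hk
    omega
  calc ∑ t : F, t ^ a * (1 - t) ^ b
      = ∑ i ∈ range (b + 1), (-1) ^ i * b.choose i * ∑ t : F, t ^ (a + i) := by
        simp_rw [hexpand, mul_sum]
        exact sum_comm
    _ = ∑ i ∈ range (b + 1), if i = c then -((-1) ^ i * b.choose i : F) else 0 := by
        refine sum_congr rfl fun i hi ↦ ?_
        rw [sum_pow_eq_ite (by omega), if_congr (hdvd hi) rfl rfl, mul_ite, mul_neg_one, mul_zero]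
    _ = -((-1) ^ c * b.choose c) := by
        rw [sum_ite_eq']
        split_ifs with hc
        · rfl
        · rw [Nat.choose_eq_zero_of_lt (by simpa using hc), Nat.cast_zero, mul_zero, neg_zero]

/-- The tautological multiplicative character of a field `F` with values in `F` itself, the
finite-field analogue of the Teichmüller character. -/
noncomputable def tautologicalMulChar (F : Type*) [Field F] : MulChar F F :=
  MulChar.ofUnitHom (MonoidHom.id Fˣ)

lemma tautologicalMulChar_pow_apply {F : Type*} [Field F] {n : ℕ} (hn : n ≠ 0) (x : F) :
    (tautologicalMulChar F ^ n) x = x ^ n := by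
  rw [MulChar.pow_apply' _ hn]
  rcases eq_or_ne x 0 with rfl | hx
  · rw [MulChar.map_zero]
  · lift x to Fˣ using hx.isUnit
    rw [tautologicalMulChar, MulChar.ofUnitHom_coe, MonoidHom.id_apply]

lemma orderOf_tautologicalMulChar (F : Type*) [Field F] [Fintype F] :
    orderOf (tautologicalMulChar F) = Fintype.card F - 1 := by
  classical
  rw [← Fintype.card_units]
  obtain ⟨g, hg⟩ := IsCyclic.exists_generator (α := Fˣ)
  rw [← Nat.card_eq_fintype_card, ← orderOf_eq_card_of_forall_mem_zpowers hg]
  refine orderOf_eq_orderOf_iff.2 fun n ↦ ?_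
  rw [MulChar.eq_iff hg, MulChar.pow_apply_coe, MulChar.one_apply_coe, tautologicalMulChar,
    MulChar.ofUnitHom_coe, MonoidHom.id_apply, ← Units.val_pow_eq_pow_val, Units.val_eq_one]

lemma jacobiSum_tautologicalMulChar_pow {F : Type*} [Field F] [Fintype F] {a b c : ℕ} (ha : 0 < a)
    (hb₀ : b ≠ 0) (hac : a + c = Fintype.card F - 1) (hb : b < Fintype.card F - 1 + c) :
    jacobiSum (tautologicalMulChar F ^ a) (tautologicalMulChar F ^ b) =
      -((-1) ^ c * b.choose c) := by
  rw [← sum_pow_mul_one_sub_pow ha hac hb]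
  exact sum_congr rfl fun t _ ↦ by
    rw [tautologicalMulChar_pow_apply ha.ne', tautologicalMulChar_pow_apply hb₀]

lemma sq_add_two_mul_sq_eq_card_of_jacobiSum_eq {F : Type*} [Field F] [Fintype F]
    {χ : MulChar F ℂ} (hχ : orderOf χ = 8) {u v : ℤ} {s : ℂ} (hs : s ^ 2 = -2)
    (hJ : jacobiSum χ (χ ^ 3) = u + v * s) (hJ' : jacobiSum χ⁻¹ (χ⁻¹ ^ 3) = u - v * s) :
    u ^ 2 + 2 * v ^ 2 = Fintype.card F := by
  have hpow {n : ℕ} (hn : n ≠ 0) (hn8 : n < 8) : χ ^ n ≠ 1 :=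
    pow_ne_one_of_lt_orderOf hn (hχ ▸ hn8)
  have hchar : ringChar ℂ ≠ ringChar F := by
    rw [ringChar.eq_zero]
    exact (CharP.ringChar_ne_zero_of_finite F).symm
  have hnorm : (u + v * s) * (u - v * s) = (Fintype.card F : ℂ) := by
    rw [← hJ, ← hJ', inv_pow]
    exact jacobiSum_mul_jacobiSum_inv hchar (pow_one χ ▸ hpow one_ne_zero (by norm_num))
      (hpow three_ne_zero (by norm_num)) (pow_succ' χ 3 ▸ hpow four_ne_zero (by norm_num))
  have hcast : ((u ^ 2 + 2 * v ^ 2 : ℤ) : ℂ) = (Fintype.card F : ℤ) := by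
    push_cast
    linear_combination hnorm + v ^ 2 * hs
  exact_mod_cast hcast

lemma pos_of_card_eq_eight_mul_add_one {F : Type*} [Field F] [Fintype F] {m : ℕ}
    (hF : Fintype.card F = 8 * m + 1) : 0 < m := by
  have := Fintype.one_lt_card (α := F)
  omega

lemma jacobiSum_tautologicalMulChar_pow_pow_three {F : Type*} [Field F] [Fintype F] {m : ℕ}
    (hF : Fintype.card F = 8 * m + 1) :
    jacobiSum (tautologicalMulChar F ^ m) ((tautologicalMulChar F ^ m) ^ 3) = 0 := by
  have hm := pos_of_card_eq_eight_mul_add_one hF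
  rw [← pow_mul, jacobiSum_tautologicalMulChar_pow (c := 7 * m) hm (by omega) (by omega)
    (by omega), Nat.choose_eq_zero_of_lt (by omega), Nat.cast_zero, mul_zero, neg_zero]

lemma jacobiSum_tautologicalMulChar_pow_inv_pow_three {F : Type*} [Field F] [Fintype F] {m : ℕ}
    (hF : Fintype.card F = 8 * m + 1) :
    jacobiSum (tautologicalMulChar F ^ m)⁻¹ ((tautologicalMulChar F ^ m)⁻¹ ^ 3) =
      -((-1) ^ m * (5 * m).choose m) := by
  have hm := pos_of_card_eq_eight_mul_add_one hF
  have h8 : tautologicalMulChar F ^ (8 * m) = 1 := by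
    rw [← pow_orderOf_eq_one (tautologicalMulChar F), orderOf_tautologicalMulChar, hF,
      Nat.add_sub_cancel]
  have hinv : (tautologicalMulChar F ^ m)⁻¹ = tautologicalMulChar F ^ (7 * m) := by
    rw [inv_eq_iff_mul_eq_one, ← pow_add, ← h8]
    ring_nf
  have hinv₃ : (tautologicalMulChar F ^ m)⁻¹ ^ 3 = tautologicalMulChar F ^ (5 * m) := by
    rw [hinv, ← pow_mul, show 7 * m * 3 = 5 * m + 2 * (8 * m) by ring, pow_add,
      pow_mul' _ 2, h8, one_pow, mul_one]
  rw [hinv₃, hinv]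
  exact jacobiSum_tautologicalMulChar_pow (by omega) (by omega) (by omega) (by omega)

lemma exists_sq_add_two_mul_sq_eq_card {F : Type} [Field F] [Fintype F] {m : ℕ}
    (hF : Fintype.card F = 8 * m + 1) :
    ∃ u v : ℤ, u ^ 2 + 2 * v ^ 2 = Fintype.card F ∧
      (2 * u : F) ^ 2 = ((5 * m).choose m : F) ^ 2 := by
  obtain ⟨u, v, huv⟩ := exists_forall_jacobiSum_eq_add_mul F
  refine ⟨u, v, ?_, ?_⟩
  · obtain ⟨χ, hχ⟩ := MulChar.exists_mulChar_orderOf F (n := 8) ⟨m, by omega⟩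
      (Complex.isPrimitiveRoot_exp 8 (by norm_num))
    obtain ⟨s, hs, hJ, hJ'⟩ := huv ℂ χ hχ
    exact sq_add_two_mul_sq_eq_card_of_jacobiSum_eq hχ hs hJ hJ'
  · have hm := pos_of_card_eq_eight_mul_add_one hF
    have hω : orderOf (tautologicalMulChar F ^ m) = 8 := by
      rw [orderOf_pow_of_dvd hm.ne' (by simp [orderOf_tautologicalMulChar, hF]),
        orderOf_tautologicalMulChar, hF, Nat.add_sub_cancel, Nat.mul_div_cancel _ hm]
    obtain ⟨s, -, hJ, hJ'⟩ := huv F _ hω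
    have h2u : (2 * u : F) = -((-1) ^ m * (5 * m).choose m) := by
      rw [← jacobiSum_tautologicalMulChar_pow_inv_pow_three hF, hJ']
      linear_combination hJ.symm.trans (jacobiSum_tautologicalMulChar_pow_pow_three hF)
    rw [h2u, neg_sq, mul_pow, pow_right_comm, neg_one_sq, one_pow, one_mul]

end OcticJacobiSum

section Representations

lemma sq_eq_sq_of_add_mul_sq_eq {p x y u v d : ℤ} (hp : Prime p) (hp₀ : 0 < p) (hd : 1 < d)
    (hxy : p = x ^ 2 + d * y ^ 2) (huv : p = u ^ 2 + d * v ^ 2) : x ^ 2 = u ^ 2 := by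
  wlog hdvd : p ∣ x * v - u * y generalizing v
  · have hmul : p ∣ (x * v - u * y) * (x * v + u * y) :=
      ⟨v ^ 2 - y ^ 2, by linear_combination y ^ 2 * huv - v ^ 2 * hxy⟩
    refine this (v := -v) (by rw [huv, neg_sq]) (dvd_neg.1 ?_)
    convert (hp.dvd_or_dvd hmul).resolve_left hdvd using 1
    ring
  obtain ⟨c, hc⟩ := hdvd
  have hbrahmagupta : p ^ 2 = (x * u + d * y * v) ^ 2 + d * (x * v - u * y) ^ 2 := by
    linear_combination p * hxy + (x ^ 2 + d * y ^ 2) * huv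
  have hc₀ : c = 0 := by
    by_contra hne
    have hc_sq : 0 < c ^ 2 := by positivity
    rw [hc] at hbrahmagupta
    nlinarith [sq_nonneg (x * u + d * y * v), sq_pos_of_pos hp₀]
  have hvy : p * (v ^ 2 - y ^ 2) = 0 := by
    rw [hc₀, mul_zero] at hc
    linear_combination v ^ 2 * hxy - y ^ 2 * huv + (x * v + u * y) * hc
  rcases mul_eq_zero.1 hvy with h | h
  · omega
  · linear_combination huv - hxy + d * h

lemma exists_eq_sq_of_mul_eq_two_mul_sq {a b w : ℤ} (ha : 0 < a) (hb : 0 < b)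
    (hab : IsCoprime a b) (h : a * b = 2 * w ^ 2) (ha₂ : Even a) :
    ∃ x y, b = x ^ 2 ∧ a = 2 * y ^ 2 := by
  obtain ⟨c, rfl⟩ := ha₂.two_dvd
  have hcb : c * b = w ^ 2 := by linarith
  have hcop : IsCoprime c b := hab.of_mul_left_right
  obtain ⟨x, hx⟩ := Int.sq_of_isCoprime hcop.symm (mul_comm c b ▸ hcb)
  obtain ⟨y, hy⟩ := Int.sq_of_isCoprime hcop hcb
  exact ⟨x, y, hx.resolve_right (by nlinarith), by rw [hy.resolve_right (by nlinarith)]⟩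

lemma exists_eq_sq_add_two_mul_sq_of_sq_eq {p u v : ℤ} (hp : Prime p) (hp₀ : 0 < p) (hodd : Odd p)
    (hv : v ≠ 0) (h : p ^ 2 = u ^ 2 + 2 * v ^ 2) :
    ∃ x y : ℤ, p = x ^ 2 + 2 * y ^ 2 ∧ u ^ 2 = (x ^ 2 - 2 * y ^ 2) ^ 2 := by
  have hlt : u ^ 2 < p ^ 2 := by
    have := sq_pos_of_ne_zero hv
    linarith
  obtain ⟨hpu, hup⟩ := abs_lt_of_sq_lt_sq' hlt hp₀.le
  have hu : Odd u := by
    have : Odd (u ^ 2) := by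
      rw [show u ^ 2 = p ^ 2 - 2 * v ^ 2 by linarith]
      exact hodd.pow.sub_even (even_two_mul _)
    exact (Int.odd_pow' two_ne_zero).1 this
  obtain ⟨b, hb⟩ : Even (p + u) := hodd.add_odd hu
  obtain ⟨a, ha⟩ : Even (p - u) := hodd.sub_odd hu
  obtain ⟨w, rfl⟩ : Even v := by
    have : Even (v ^ 2) := ⟨a * b, by nlinarith⟩
    exact (Int.even_pow.1 this).1
  have hprod : a * b = 2 * w ^ 2 := by nlinarith
  have hcop : IsCoprime a b := by
    have hpa : ¬p ∣ a := fun hd ↦ by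
      have := Int.le_of_dvd (by omega) hd
      omega
    rw [show b = p + a * (-1) by omega]
    exact ((hp.coprime_iff_not_dvd).2 hpa).symm.add_mul_left_right (-1)
  rcases Int.even_mul.1 ⟨w ^ 2, hprod.trans (two_mul _)⟩ with ha₂ | hb₂
  · obtain ⟨x, y, hx, hy⟩ :=
      exists_eq_sq_of_mul_eq_two_mul_sq (by omega) (by omega) hcop hprod ha₂
    exact ⟨x, y, by linarith, by rw [← hx, ← hy, show u = b - a by linarith]⟩
  · obtain ⟨x, y, hx, hy⟩ := exists_eq_sq_of_mul_eq_two_mul_sq (by omega) (by omega) hcop.symm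
      (mul_comm a b ▸ hprod) hb₂
    exact ⟨x, y, by linarith, by rw [← hx, ← hy, show u = b - a by linarith, sub_sq_comm]⟩

end Representations

section ChooseMod

lemma cast_choose_sq_eq_choose_add_sq {K : Type*} [Field K] {p : ℕ} [CharP K p]
    {a b i : ℕ} (hab : a + b + 1 = p) (hi : i < p) :
    (b.choose i : K) ^ 2 = ((a + i).choose i : K) ^ 2 := by
  rw [cast_choose_eq_neg_one_pow_mul_choose_add hab hi, mul_pow, pow_right_comm, neg_one_sq,
    one_pow, one_mul]

lemma exists_sq_add_two_mul_sq_of_eq_eight_mul_add_one {p k : ℕ} [Fact p.Prime]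
    (hk : p = 8 * k + 1) :
    ∃ x y : ℤ, (p : ℤ) = x ^ 2 + 2 * y ^ 2 ∧ ((4 * k).choose k : ZMod p) ^ 2 = 4 * x ^ 2 := by
  obtain ⟨x, y, hxy, hx⟩ := exists_sq_add_two_mul_sq_eq_card ((ZMod.card p).trans hk)
  rw [ZMod.card] at hxy
  refine ⟨x, y, hxy.symm, ?_⟩
  rw [cast_choose_sq_eq_choose_add_sq (a := 4 * k) (by omega) (by omega),
    show 4 * k + k = 5 * k by ring, ← hx]
  ring

lemma cast_choose_sq_eq_choose_pow_four {p k : ℕ} [Fact p.Prime] (hk : p = 8 * k + 3) :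
    ((5 * (k * p + (3 * k + 1))).choose (k * p + (3 * k + 1)) : ZMod p) ^ 2 =
      ((4 * k + 1).choose k : ZMod p) ^ 4 := by
  have hlucas : ((5 * (k * p + (3 * k + 1))).choose (k * p + (3 * k + 1)) : ZMod p) =
      (4 * k + 1 + (3 * k + 1)).choose (3 * k + 1) * (4 * k + 1 + k).choose k := by
    have hn : 5 * (k * p + (3 * k + 1)) = 4 * k + 1 + (3 * k + 1) + p * (4 * k + 1 + k) := by
      rw [hk]
      ring
    rw [hn, show k * p + (3 * k + 1) = 3 * k + 1 + p * k by ring, ← Nat.cast_mul,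
      ZMod.natCast_eq_natCast_iff]
    convert Choose.choose_modEq_choose_mod_mul_choose_div_nat (p := p) using 3
    all_goals simp (disch := omega) [Nat.mod_eq_of_lt, Nat.add_mul_div_left, Nat.div_eq_of_lt]
  have hsymm : (4 * k + 1).choose k = (4 * k + 1).choose (3 * k + 1) :=
    Nat.choose_symm_of_eq_add (by omega)
  have hreflect {i : ℕ} (hi : i < p) :=
    cast_choose_sq_eq_choose_add_sq (K := ZMod p) (a := 4 * k + 1) (b := 4 * k + 1) (by omega) hi
  rw [hlucas, mul_pow, ← hreflect (by omega), ← hreflect (by omega), ← hsymm]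
  ring

lemma exists_sq_add_two_mul_sq_eq_sq_of_eq_eight_mul_add_three {p k : ℕ} [Fact p.Prime]
    (hk : p = 8 * k + 3) :
    ∃ u v : ℤ, (p : ℤ) ^ 2 = u ^ 2 + 2 * v ^ 2 ∧
      ((4 * k + 1).choose k : ZMod p) ^ 4 = (2 * u) ^ 2 := by
  let := Fintype.ofFinite (GaloisField p 2)
  have hcard : Fintype.card (GaloisField p 2) = p ^ 2 := by
    rw [← Nat.card_eq_fintype_card, GaloisField.card p 2 two_ne_zero]
  obtain ⟨u, v, huv, hu⟩ := exists_sq_add_two_mul_sq_eq_card (F := GaloisField p 2)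
    (m := k * p + (3 * k + 1)) (by rw [hcard, hk]; ring)
  refine ⟨u, v, by rw [huv, hcard, Nat.cast_pow], ?_⟩
  rw [← cast_choose_sq_eq_choose_pow_four hk]
  apply (algebraMap (ZMod p) (GaloisField p 2)).injective
  simpa only [map_pow, map_mul, map_intCast, map_natCast, map_ofNat] using hu.symm

lemma exists_sq_add_two_mul_sq_of_eq_eight_mul_add_three {p k : ℕ} [Fact p.Prime]
    (hk : p = 8 * k + 3) :
    ∃ x y : ℤ, (p : ℤ) = x ^ 2 + 2 * y ^ 2 ∧ ((4 * k + 1).choose k : ZMod p) ^ 2 = 4 * x ^ 2 := by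
  have hp : Prime (p : ℤ) := Nat.prime_iff_prime_int.1 Fact.out
  obtain ⟨u, v, huv, hu⟩ := exists_sq_add_two_mul_sq_eq_sq_of_eq_eight_mul_add_three hk
  have hc : ((4 * k + 1).choose k : ZMod p) ≠ 0 := by
    rw [Ne, CharP.cast_eq_zero_iff (ZMod p) p, ← (Fact.out : p.Prime).coprime_iff_not_dvd]
    exact Nat.Prime.coprime_choose_of_lt Fact.out (by omega) (by omega)
  have hv : v ≠ 0 := by
    rintro rfl
    have hpu : (p : ℤ) ∣ u := hp.dvd_of_dvd_pow (n := 2) ⟨p, by linarith⟩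
    rw [(ZMod.intCast_zmod_eq_zero_iff_dvd u p).2 hpu] at hu
    exact hc (by simpa using hu)
  obtain ⟨x, y, hxy, hux⟩ := exists_eq_sq_add_two_mul_sq_of_sq_eq hp (by omega)
    (by exact_mod_cast Nat.odd_iff.2 (by omega)) hv huv
  refine ⟨x, y, hxy, ?_⟩
  have hxy₀ : (0 : ZMod p) = x ^ 2 + 2 * y ^ 2 := by
    rw [← CharP.cast_eq_zero (ZMod p) p]
    exact_mod_cast congrArg (Int.cast : ℤ → ZMod p) hxy
  have hux₀ : (u : ZMod p) ^ 2 = (x ^ 2 - 2 * y ^ 2) ^ 2 := by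
    exact_mod_cast congrArg (Int.cast : ℤ → ZMod p) hux
  have hsq : (((4 * k + 1).choose k : ZMod p) ^ 2) ^ 2 = (4 * x ^ 2) ^ 2 := by
    linear_combination hu + 4 * hux₀ + (4 : ZMod p) * (3 * x ^ 2 - 2 * y ^ 2) * hxy₀
  refine (sq_eq_sq_iff_eq_or_eq_neg.1 hsq).resolve_right fun h ↦ ?_
  refine ZMod.mod_four_ne_three_of_sq_eq_neg_sq (y := 2 * (x : ZMod p)) hc ?_ (by omega)
  rw [h]
  ring

end ChooseMod

lemma sum_range_three_cast_A_div_eight_pow :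
    ∑ n ∈ range 3, (A n : ZMod 3) / 8 ^ n = 1 := by
  have hA : A 0 = 1 ∧ A 1 = 4 ∧ A 2 = 28 := by decide
  have h8 : (8 : ZMod 3) = -1 := by decide
  rw [sum_range_succ, sum_range_succ, sum_range_one, hA.1, hA.2.1, hA.2.2, h8, pow_zero, pow_one,
    neg_one_sq, div_one, div_one, div_neg, div_one]
  decide

lemma exists_sq_add_two_mul_sq_and_sum_eq {p : ℕ} [Fact p.Prime] (hmod : p % 8 = 1 ∨ p % 8 = 3) :
    ∃ x y : ℤ, (p : ℤ) = x ^ 2 + 2 * y ^ 2 ∧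
      ∑ n ∈ range p, (A n : ZMod p) / 8 ^ n = 4 * x ^ 2 := by
  rcases eq_or_ne p 3 with rfl | hp₃
  · exact ⟨1, 1, rfl, by rw [sum_range_three_cast_A_div_eight_pow, Int.cast_one]; rfl⟩
  have hp := (Fact.out : p.Prime).two_le
  rw [sum_cast_A_div_eight_pow_eq_choose_sq (by omega) hmod]
  rcases hmod with h | h
  · rw [show p / 2 = 4 * (p / 8) by omega]
    exact exists_sq_add_two_mul_sq_of_eq_eight_mul_add_one (by omega)
  · rw [show p / 2 = 4 * (p / 8) + 1 by omega]
    exact exists_sq_add_two_mul_sq_of_eq_eight_mul_add_three (by omega)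

theorem stmt_7 (p : ℕ) [Fact p.Prime] (hodd : Odd p) :
    ((p % 8 = 1 ∨ p % 8 = 3) →
      (∃ x y : ℤ, (p : ℤ) = x ^ 2 + 2 * y ^ 2) ∧
        ∀ x y : ℤ, (p : ℤ) = x ^ 2 + 2 * y ^ 2 →
          (∑ n ∈ Finset.range p, (A n : ZMod p) / (8 : ZMod p) ^ n) = 4 * (x : ZMod p) ^ 2)
    ∧
    ((p % 8 = 5 ∨ p % 8 = 7) →
      (∑ n ∈ Finset.range p, (A n : ZMod p) / (8 : ZMod p) ^ n) = 0) := by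
  refine ⟨fun hmod ↦ ?_, sum_cast_A_div_eight_pow_eq_zero⟩
  have hp : p.Prime := Fact.out
  obtain ⟨x, y, hxy, hsum⟩ := exists_sq_add_two_mul_sq_and_sum_eq hmod
  refine ⟨⟨x, y, hxy⟩, fun u v huv ↦ ?_⟩
  have hxu : x ^ 2 = u ^ 2 := sq_eq_sq_of_add_mul_sq_eq (Nat.prime_iff_prime_int.1 hp)
    (by exact_mod_cast hp.pos) one_lt_two hxy huv
  rw [hsum]
  exact_mod_cast congrArg (fun z : ℤ ↦ 4 * (z : ZMod p)) hxu
end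

section
/- For every nonnegative integer n, Σ_{k=0}^{n} C(2k,k) · C(n+k,2k) · (-9)^{n-k} · a_k = Σ_{k=0}^{n} C(2k,k)^2 · C(4k,2k) · C(n+3k,4k) · (-27)^{n-k}, where a_k = Σ_{j=0}^{k} C(k,j)^2 · C(2j,j). -/
open Finset

/-- `a n = ∑_{k=0}^{n} C(n,k)^2·C(2k,k)`. -/
def a (n : ℕ) : ℕ :=
  ∑ k ∈ Finset.range (n + 1), Nat.choose n k ^ 2 * Nat.choose (2 * k) k

/-!
The two sides agree for `n = 0, 1` and satisfy the same recurrence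
`(n+2)³ s (n+2) + (2n+3)(7(n+1)(n+2) + 3) s (n+1) + 81 (n+1)³ s n = 0`.
Both recurrences, and the one of `a` on which the left side depends, come from creative telescoping
(Zeilberger's algorithm): the operator, applied in `n` to the summand, is a difference
`G (k+1) - G k` with an explicit `G` built from the summand. On the left nothing is needed about `a`
beyond its three-term recurrence.
-/

theorem eq_of_secondOrder_recurrence {R : Type*} [CommRing R] [IsDomain R] {A B C s t : ℕ → R}
    (hA : ∀ n, A n ≠ 0)
    (hs : ∀ n, A n * s (n + 2) + B n * s (n + 1) + C n * s n = 0)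
    (ht : ∀ n, A n * t (n + 2) + B n * t (n + 1) + C n * t n = 0)
    (h₀ : s 0 = t 0) (h₁ : s 1 = t 1) : s = t := by
  funext n
  induction n using Nat.twoStepInduction with
  | zero => exact h₀
  | one => exact h₁
  | more n ih ih' =>
    refine mul_left_cancel₀ (hA n) ?_
    linear_combination hs n - ht n - B n * ih' - C n * ih

theorem sum_range_secondOrder_recurrence_of_telescoping {R : Type*} [CommRing R]
    {F : ℕ → ℕ → R} {G : ℕ → R} {A B C : R} {n : ℕ}
    (hF : ∀ m k, m < k → F m k = 0)
    (hFG : ∀ k, A * F (n + 2) k + B * F (n + 1) k + C * F n k = G (k + 1) - G k)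
    (hG : G 0 = 0) (hG' : G (n + 3) = 0) :
    A * ∑ k ∈ range (n + 2 + 1), F (n + 2) k + B * ∑ k ∈ range (n + 1 + 1), F (n + 1) k
      + C * ∑ k ∈ range (n + 1), F n k = 0 := by
  have extend {m : ℕ} (hm : m ≤ n + 2) :
      ∑ k ∈ range (m + 1), F m k = ∑ k ∈ range (n + 3), F m k :=
    sum_subset (range_mono (by lia)) fun k _ hk ↦ hF m k (by simpa using hk)
  rw [extend le_rfl, extend (m := n + 1) (by lia), extend (m := n) (by lia)]
  simp only [mul_sum, ← sum_add_distrib, hFG, sum_range_sub, hG, hG', sub_zero]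

theorem cast_succ_sub_mul_choose_succ {R : Type*} [CommRing R] (n k : ℕ) :
    ((n : R) + 1 - k) * ((n + 1).choose k : R) = (n + 1) * (n.choose k : R) := by
  obtain hk | hk := le_or_gt k (n + 1)
  · have h := congrArg (Nat.cast (R := R)) (Nat.choose_mul_succ_eq n k)
    push_cast [Nat.cast_sub hk] at h
    linear_combination -h
  · simp [Nat.choose_eq_zero_of_lt hk, Nat.choose_eq_zero_of_lt (show n < k by lia)]

theorem cast_choose_eq_div_mul_choose_succ {K : Type*} [Field K] [CharZero K] (n k : ℕ) :
    (n.choose k : K) = (n + 1 - k) / (n + 1) * (n + 1).choose k := by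
  have hn : (n : K) + 1 ≠ 0 := n.cast_add_one_ne_zero
  rw [div_mul_eq_mul_div, cast_succ_sub_mul_choose_succ, mul_div_cancel_left₀ _ hn]

theorem cast_centralBinom_succ {K : Type*} [Field K] [CharZero K] (n : ℕ) :
    ((n + 1).centralBinom : K) = 2 * (2 * n + 1) / (n + 1) * n.centralBinom := by
  have hn : (n : K) + 1 ≠ 0 := n.cast_add_one_ne_zero
  have h : ((n : K) + 1) * (n + 1).centralBinom = 2 * (2 * n + 1) * n.centralBinom :=
    mod_cast n.succ_mul_centralBinom_succ
  rw [div_mul_eq_mul_div, ← h, mul_div_cancel_left₀ _ hn]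

theorem ascFactorial_mul_choose_add (n k r : ℕ) :
    (k + 1).ascFactorial r * (n + r).choose (k + r) = (n + 1).ascFactorial r * n.choose k := by
  induction r with
  | zero => simp
  | succ r ih =>
    have h := Nat.add_one_mul_choose_eq (n + r) (k + r)
    rw [Nat.ascFactorial_succ, Nat.ascFactorial_succ, ← add_assoc, ← add_assoc]
    linear_combination (n + r + 1) * ih - (k + 1).ascFactorial r * h

theorem sum_choose_sq_mul_centralBinom_recurrence (n : ℕ) :
    ((n : ℚ) + 2) ^ 2 * ∑ k ∈ range (n + 2 + 1), (n + 2).choose k ^ 2 * (k.centralBinom : ℚ)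
      + -(10 * (n + 1) * (n + 2) + 3)
        * ∑ k ∈ range (n + 1 + 1), (n + 1).choose k ^ 2 * (k.centralBinom : ℚ)
      + 9 * (n + 1) ^ 2 * ∑ k ∈ range (n + 1), n.choose k ^ 2 * (k.centralBinom : ℚ) = 0 := by
  let F (m k : ℕ) : ℚ := m.choose k ^ 2 * k.centralBinom
  refine sum_range_secondOrder_recurrence_of_telescoping
    (G := fun k ↦ k ^ 3 * (3 * k - 4 * n - 8) / (n + 2) ^ 2 * F (n + 2) k)
    (F := F) (fun m k h ↦ by simp [F, Nat.choose_eq_zero_of_lt h]) (fun k ↦ ?_) (by simp)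
    (by simp [F])
  have hn : (n : ℚ) + 1 ≠ 0 := n.cast_add_one_ne_zero
  have hn' : (n : ℚ) + 2 ≠ 0 := mod_cast (n + 1).succ_ne_zero
  have hk : (k : ℚ) + 1 ≠ 0 := k.cast_add_one_ne_zero
  have h₀ := cast_choose_eq_div_mul_choose_succ (K := ℚ) n k
  have h₁ := cast_choose_eq_div_mul_choose_succ (K := ℚ) (n + 1) k
  have h₂ : ((n + 2).choose (k + 1) : ℚ) = (n + 2) / (k + 1) * (n + 1).choose k := by
    have h : ((n : ℚ) + 2) * (n + 1).choose k = (n + 2).choose (k + 1) * (k + 1) :=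
      mod_cast Nat.add_one_mul_choose_eq (n + 1) k
    field_simp
    linear_combination -h
  have hb := cast_centralBinom_succ (K := ℚ) k
  rw [show ((n + 1 : ℕ) : ℚ) + 1 = n + 2 by push_cast; ring] at h₁
  simp only [F, h₂, hb, h₀, h₁]
  push_cast
  field_simp
  ring

/-- An Apéry-like sequence: a solution of a three-term recurrence of degree two, parametrized by its
characteristic roots `p` and `q`. At `n = 0` the truncated `n - 1` is multiplied by `0`. -/
def IsAperyLike {R : Type*} [CommRing R] (p q b : R) (u : ℕ → R) : Prop :=
  ∀ n : ℕ, ((n : R) + 1) ^ 2 * u (n + 1)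
    = ((p + q) * n * (n + 1) + b) * u n - p * q * n ^ 2 * u (n - 1)

theorem isAperyLike_a : IsAperyLike (9 : ℚ) 1 3 (fun n ↦ a n) := by
  intro n
  obtain _ | n := n
  · simp [a, sum_range_succ]
  have a_eq_sum (m : ℕ) :
      (a m : ℚ) = ∑ k ∈ range (m + 1), m.choose k ^ 2 * (k.centralBinom : ℚ) := by
    simp [a, Nat.centralBinom]
  have recurrence := sum_choose_sq_mul_centralBinom_recurrence n
  simp only [← a_eq_sum] at recurrence
  rw [Nat.add_sub_cancel]
  push_cast
  linear_combination recurrence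

section MultinomialTerm

open scoped Nat

variable {K : Type*} [Field K]

/-- The term `(n + jk)! / (k!^(j+1) (n - k)!) * x^(n - k)` of the multinomial expansion with `k`
repeated `j + 1` times, which for `j = 1` and `j = 3` gives the weights of the two sums to be
compared. Splitting off the first binomial coefficient makes it `0` for `k > n`. -/
def multinomialTerm (j : ℕ) (x : K) (n k : ℕ) : K :=
  (n + j * k).choose ((j + 1) * k) * (((j + 1) * k)! / (k ! : K) ^ (j + 1)) * x ^ (n - k)

theorem multinomialTerm_of_lt (j : ℕ) (x : K) {n k : ℕ} (h : n < k) :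
    multinomialTerm j x n k = 0 := by
  have : n + j * k < (j + 1) * k := by linarith
  simp [multinomialTerm, Nat.choose_eq_zero_of_lt this]

theorem sub_mul_multinomialTerm_succ_left (j : ℕ) (x : K) (n k : ℕ) :
    ((n : K) + 1 - k) * multinomialTerm j x (n + 1) k
      = x * (n + j * k + 1) * multinomialTerm j x n k := by
  obtain hk | hk := le_or_gt k n
  · have h := cast_succ_sub_mul_choose_succ (R := K) (n + j * k) ((j + 1) * k)
    push_cast at h
    rw [multinomialTerm, multinomialTerm, Nat.sub_add_comm hk, pow_succ, add_right_comm n 1]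
    linear_combination (((j + 1) * k)! / (k ! : K) ^ (j + 1)) * x ^ (n - k) * x * h
  · rw [multinomialTerm_of_lt j x hk, mul_zero]
    obtain rfl | hk' := (Nat.succ_le_of_lt hk).eq_or_lt
    · simp
    · rw [multinomialTerm_of_lt j x hk', mul_zero]

variable [CharZero K]

theorem multinomialTerm_eq_div_mul_succ_left (j : ℕ) {x : K} (hx : x ≠ 0) (n k : ℕ) :
    multinomialTerm j x n k
      = (n + 1 - k) / (x * (n + j * k + 1)) * multinomialTerm j x (n + 1) k := by
  have h : (n : K) + j * k + 1 ≠ 0 := mod_cast (n + j * k).succ_ne_zero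
  rw [div_mul_eq_mul_div, eq_div_iff (mul_ne_zero hx h)]
  linear_combination -sub_mul_multinomialTerm_succ_left j x n k

theorem pow_mul_multinomialTerm_succ_succ (j : ℕ) (x : K) (n k : ℕ) :
    ((k : K) + 1) ^ (j + 1) * multinomialTerm j x (n + 1) (k + 1)
      = (n + j * k + 1).ascFactorial (j + 1) * multinomialTerm j x n k := by
  have hk : (k ! : K) ≠ 0 := mod_cast k.factorial_ne_zero
  have hk' : (k : K) + 1 ≠ 0 := k.cast_add_one_ne_zero
  have h := congrArg (Nat.cast (R := K))
    (ascFactorial_mul_choose_add (n + j * k) ((j + 1) * k) (j + 1))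
  push_cast at h
  rw [multinomialTerm, multinomialTerm, Nat.add_sub_add_right,
    show n + 1 + j * (k + 1) = n + j * k + (j + 1) by ring, mul_add_one,
    ← Nat.factorial_mul_ascFactorial, Nat.factorial_succ]
  push_cast
  rw [mul_pow]
  field_simp
  linear_combination x ^ (n - k) * ((j + 1) * k)! * h

/- The leading coefficients are those of `(1 + p t)² - 4 q t`. The root `p` contributes
`(1 + p t)² - 4 p t = (1 - p t)²`, which drops out because it is a square: this is why `x = -p`. -/
theorem IsAperyLike.sum_multinomialTerm_one_mul_recurrence {p q b : K} {u : ℕ → K}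
    (hu : IsAperyLike p q b u) (hp : p ≠ 0) (n : ℕ) :
    ((n : K) + 2) ^ 3 * ∑ k ∈ range (n + 2 + 1), multinomialTerm 1 (-p) (n + 2) k * u k
      + -((2 * n + 3) * ((2 * q - p) * (n + 1) * (n + 2) + 2 * b - p))
        * ∑ k ∈ range (n + 1 + 1), multinomialTerm 1 (-p) (n + 1) k * u k
      + p ^ 2 * (n + 1) ^ 3 * ∑ k ∈ range (n + 1), multinomialTerm 1 (-p) n k * u k = 0 := by
  let G (k : ℕ) : K := -(4 * n + 6) * (k ^ 2 * u k + q * (n + k + 1) * (n + 2 - k) * u (k - 1))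
    / ((n + k + 1) * (n + k + 2)) * (k ^ 2 * multinomialTerm 1 (-p) (n + 2) k)
  refine sum_range_secondOrder_recurrence_of_telescoping
    (F := fun n k ↦ multinomialTerm 1 (-p) n k * u k) (G := G)
    (fun m k h ↦ by simp [multinomialTerm_of_lt 1 (-p) h]) (fun k ↦ ?_) (by simp [G])
    (by simp [G, multinomialTerm_of_lt])
  have h₁ : (n : K) + k + 1 ≠ 0 := mod_cast (n + k).succ_ne_zero
  have h₂ : (n : K) + k + 2 ≠ 0 := mod_cast (n + k + 1).succ_ne_zero
  have h₃ : (n : K) + k + 3 ≠ 0 := mod_cast (n + k + 2).succ_ne_zero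
  have hG : G (k + 1) = -(4 * n + 6)
      * ((k + 1) ^ 2 * u (k + 1) + q * (n + k + 2) * (n + 1 - k) * u k)
      * multinomialTerm 1 (-p) (n + 1) k := by
    simp only [G, Nat.add_sub_cancel, Nat.cast_add_one,
      pow_mul_multinomialTerm_succ_succ 1, Nat.ascFactorial_succ, Nat.ascFactorial_zero]
    push_cast
    rw [show (n : K) + (k + 1) + 1 = n + k + 2 by ring,
      show (n : K) + (k + 1) + 2 = n + k + 3 by ring]
    field_simp
    ring
  have hn₀ : multinomialTerm 1 (-p) n k
      = (n + 1 - k) / (-p * (n + k + 1)) * multinomialTerm 1 (-p) (n + 1) k := by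
    rw [multinomialTerm_eq_div_mul_succ_left 1 (neg_ne_zero.2 hp)]
    push_cast
    ring
  have hn₁ : multinomialTerm 1 (-p) (n + 1) k
      = (n + 2 - k) / (-p * (n + k + 2)) * multinomialTerm 1 (-p) (n + 2) k := by
    rw [multinomialTerm_eq_div_mul_succ_left 1 (neg_ne_zero.2 hp)]
    push_cast
    ring
  simp only [hG, G, hu k, hn₀, hn₁]
  field_simp
  ring

theorem sum_multinomialTerm_three_recurrence (n : ℕ) :
    ((n : K) + 2) ^ 3 * ∑ k ∈ range (n + 2 + 1), multinomialTerm 3 (-27 : K) (n + 2) k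
      + (2 * n + 3) * (7 * (n + 1) * (n + 2) + 3)
        * ∑ k ∈ range (n + 1 + 1), multinomialTerm 3 (-27 : K) (n + 1) k
      + 81 * (n + 1) ^ 3 * ∑ k ∈ range (n + 1), multinomialTerm 3 (-27 : K) n k = 0 := by
  let G (k : ℕ) : K := -(16 * n + 28) / ((n + 3 * k + 1) * (n + 3 * k + 2))
    * (k ^ 4 * multinomialTerm 3 (-27) (n + 2) k)
  refine sum_range_secondOrder_recurrence_of_telescoping (F := multinomialTerm 3 (-27 : K))
    (G := G) (fun m k ↦ multinomialTerm_of_lt 3 (-27)) (fun k ↦ ?_) (by simp [G])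
    (by simp [G, multinomialTerm_of_lt])
  have h₁ : (n : K) + 3 * k + 1 ≠ 0 := mod_cast (n + 3 * k).succ_ne_zero
  have h₂ : (n : K) + 3 * k + 2 ≠ 0 := mod_cast (n + 3 * k + 1).succ_ne_zero
  have h₄ : (n : K) + 3 * k + 4 ≠ 0 := mod_cast (n + 3 * k + 3).succ_ne_zero
  have h₅ : (n : K) + 3 * k + 5 ≠ 0 := mod_cast (n + 3 * k + 4).succ_ne_zero
  have hG : G (k + 1) = -(16 * n + 28) * (n + 3 * k + 2) * (n + 3 * k + 3)
      * multinomialTerm 3 (-27) (n + 1) k := by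
    simp only [G, Nat.cast_add_one, pow_mul_multinomialTerm_succ_succ 3, Nat.ascFactorial_succ,
      Nat.ascFactorial_zero]
    push_cast
    rw [show (n : K) + 3 * (k + 1) + 1 = n + 3 * k + 4 by ring,
      show (n : K) + 3 * (k + 1) + 2 = n + 3 * k + 5 by ring]
    field_simp
    ring
  have hn₀ : multinomialTerm 3 (-27 : K) n k
      = (n + 1 - k) / (-27 * (n + 3 * k + 1)) * multinomialTerm 3 (-27) (n + 1) k := by
    rw [multinomialTerm_eq_div_mul_succ_left 3 (by norm_num)]
    push_cast
    ring
  have hn₁ : multinomialTerm 3 (-27 : K) (n + 1) k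
      = (n + 2 - k) / (-27 * (n + 3 * k + 2)) * multinomialTerm 3 (-27) (n + 2) k := by
    rw [multinomialTerm_eq_div_mul_succ_left 3 (by norm_num)]
    push_cast
    ring
  simp only [hG, G, hn₀, hn₁]
  field_simp
  ring

theorem multinomialTerm_one (x : K) (n k : ℕ) :
    multinomialTerm 1 x n k = (2 * k).choose k * (n + k).choose (2 * k) * x ^ (n - k) := by
  rw [Nat.cast_choose K (show k ≤ 2 * k by lia), show 2 * k - k = k by lia]
  simp only [multinomialTerm, one_mul, Nat.reduceAdd]
  ring

theorem multinomialTerm_three (x : K) (n k : ℕ) :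
    multinomialTerm 3 x n k
      = (2 * k).choose k ^ 2 * (4 * k).choose (2 * k) * (n + 3 * k).choose (4 * k)
        * x ^ (n - k) := by
  have h : ((2 * k)! : K) ≠ 0 := mod_cast (2 * k).factorial_ne_zero
  rw [Nat.cast_choose K (show k ≤ 2 * k by lia), show 2 * k - k = k by lia,
    Nat.cast_choose K (show 2 * k ≤ 4 * k by lia), show 4 * k - 2 * k = 2 * k by lia]
  simp only [multinomialTerm, Nat.reduceAdd]
  field_simp

end MultinomialTerm

theorem sum_multinomialTerm_one_mul_a_eq_sum_multinomialTerm_three :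
    (fun n ↦ ∑ k ∈ range (n + 1), multinomialTerm 1 (-9 : ℚ) n k * a k)
      = fun n ↦ ∑ k ∈ range (n + 1), multinomialTerm 3 (-27 : ℚ) n k := by
  refine eq_of_secondOrder_recurrence (fun n ↦ ?_)
    (isAperyLike_a.sum_multinomialTerm_one_mul_recurrence (by norm_num)) (fun n ↦ ?_) ?_ ?_
  · positivity
  · linear_combination sum_multinomialTerm_three_recurrence (K := ℚ) n
  · simp [multinomialTerm_one, multinomialTerm_three, a]
  · norm_num [multinomialTerm_one, multinomialTerm_three, a, sum_range_succ, Nat.choose]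

theorem stmt_8 (n : ℕ) :
    (∑ k ∈ Finset.range (n + 1),
        (Nat.choose (2 * k) k : ℤ) * (Nat.choose (n + k) (2 * k) : ℤ) *
          (-9 : ℤ) ^ (n - k) * (a k : ℤ))
      = ∑ k ∈ Finset.range (n + 1),
          (Nat.choose (2 * k) k : ℤ) ^ 2 * (Nat.choose (4 * k) (2 * k) : ℤ) *
            (Nat.choose (n + 3 * k) (4 * k) : ℤ) * (-27 : ℤ) ^ (n - k) := by
  have h := congrFun sum_multinomialTerm_one_mul_a_eq_sum_multinomialTerm_three n
  simp only [multinomialTerm_one, multinomialTerm_three] at h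
  exact_mod_cast h
end

section
/- Let p be an odd prime and let u be an integer with u(u+1)(3u+1) not divisible by p. Then Σ_{k=0}^{p-1} C(2k,k) · a_k · (u/(9(1+u)^2))^k ≡ Σ_{k=0}^{p-1} C(2k,k)^2 · C(4k,2k) · (u/(9(1+3u)^4))^k (mod p). -/
open Finset

/-!
In characteristic `p`, `(1 - y)^(p-1-m) = ∑ j < p-m, C(m+j,j) y^j` because `p - 1 - m = -(m + 1)`.
Hence, as soon as `(m*k)!` divides `c k * k!^m`, the sum `∑ k < p, c k * (w / (1 - x*w)^m)^k`
multiplied by `(1 - x*w)^(p-1)` is the truncation at degree `p` of the power series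
`∑ k, c k * w^k / (1 - x*w)^(m*k+1)`. With `w = u/9`, the two sums to be compared correspond to
`(m, x) = (2, -9)` and `(m, x) = (4, -27)`, and their power series agree already over `ℤ`: both
coefficient sequences are the solution, with initial value `1`, of the recurrence
`(n+1)^3 s(n+1) = -(2n+1)(7n²+7n+3) s(n) - 81 n^3 s(n-1)`.
-/

section

open scoped Nat

/-- The coefficient `x ^ j / j!` of `t ^ j` in `exp (x t)`. It is extended by zero to negative `j`,
so that `x * expCoeff x (j - 1) = j * expCoeff x j` holds for every integer `j`. -/
def expCoeff (x : ℚ) : ℤ → ℚ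
  | Int.ofNat j => x ^ j / j !
  | Int.negSucc _ => 0

lemma expCoeff_natCast (x : ℚ) (j : ℕ) : expCoeff x j = x ^ j / j ! := rfl

lemma expCoeff_of_neg (x : ℚ) {j : ℤ} (hj : j < 0) : expCoeff x j = 0 := by
  cases j with
  | ofNat j => exact absurd hj (by simp)
  | negSucc j => rfl

lemma expCoeff_add_natCast_sub (x : ℚ) (k j : ℕ) :
    expCoeff x ((k + j : ℕ) - k) = x ^ j / j ! := by
  rw [Nat.cast_add, add_sub_cancel_left, expCoeff_natCast]

lemma expCoeff_succ_sub_succ (x : ℚ) (n k : ℕ) :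
    expCoeff x ((n + 1 : ℕ) - (k + 1 : ℕ)) = expCoeff x (n - k) := by
  rw [Nat.cast_succ, Nat.cast_succ, add_sub_add_right_eq_sub]

lemma mul_expCoeff_sub_one (x : ℚ) (j : ℤ) : x * expCoeff x (j - 1) = j * expCoeff x j := by
  rcases lt_trichotomy j 0 with hj | rfl | hj
  · rw [expCoeff_of_neg x hj, expCoeff_of_neg x (by lia), mul_zero, mul_zero]
  · simp [expCoeff_of_neg]
  · obtain ⟨i, rfl⟩ : ∃ i : ℕ, j = i + 1 := ⟨(j - 1).toNat, by lia⟩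
    rw [add_sub_cancel_right, ← Nat.cast_succ, expCoeff_natCast, expCoeff_natCast,
      Nat.factorial_succ, pow_succ]
    push_cast
    field_simp

lemma expCoeff_sub_natCast {x : ℚ} (hx : x ≠ 0) (n k : ℕ) :
    expCoeff x (n - k) = (n + 1 - k) / x * expCoeff x ((n + 1 : ℕ) - k) := by
  rw [div_mul_eq_mul_div, eq_div_iff hx, mul_comm]
  convert mul_expCoeff_sub_one x ((n + 1 : ℕ) - k) using 3 <;> push_cast <;> ring

-- Creative telescoping: in the applications the certificate `G` is the output of Zeilberger's
-- algorithm.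
lemma mul_sum_range_eq_of_telescoping {R : Type*} [Ring R] {x y z : ℕ → R} {A B C : R} {N : ℕ}
    (G : ℕ → R) (h0 : G 0 = 0) (hN : G N = 0)
    (h : ∀ k, A * x k = B * y k - C * z k + (G (k + 1) - G k)) :
    A * ∑ k ∈ range N, x k = B * ∑ k ∈ range N, y k - C * ∑ k ∈ range N, z k := by
  rw [mul_sum, sum_congr rfl fun k _ ↦ h k, sum_add_distrib, sum_sub_distrib, sum_range_sub,
    h0, hN, sub_zero, add_zero, mul_sum, mul_sum]

/-- The second-order recurrence of Zagier's sporadic sequences. For `n = 0` the truncated index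
`n - 1` is harmless, since its coefficient is zero. -/
def IsZagierSeq (α β γ : ℚ) (b : ℕ → ℚ) : Prop :=
  ∀ n : ℕ, (n + 1 : ℚ) ^ 2 * b (n + 1) = (α * n * (n + 1) + β) * b n - γ * n ^ 2 * b (n - 1)

/-- The third-order analogue of `IsZagierSeq`, of the shape satisfied by Apéry's numbers for
`ζ(3)`. -/
def IsAperySeq (α β γ : ℚ) (s : ℕ → ℚ) : Prop :=
  ∀ n : ℕ, (n + 1 : ℚ) ^ 3 * s (n + 1) =
    (2 * n + 1) * (α * n * (n + 1) + β) * s n - γ * n ^ 3 * s (n - 1)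

theorem IsAperySeq.eq {α β γ : ℚ} {s t : ℕ → ℚ} (hs : IsAperySeq α β γ s)
    (ht : IsAperySeq α β γ t) (h0 : s 0 = t 0) (n : ℕ) : s n = t n := by
  induction n using Nat.strong_induction_on with
  | _ n ih =>
    cases n with
    | zero => exact h0
    | succ n =>
      refine mul_left_cancel₀ (pow_ne_zero 3 n.cast_add_one_ne_zero : ((n : ℚ) + 1) ^ 3 ≠ 0) ?_
      rw [hs n, ht n, ih n (by lia), ih (n - 1) (by lia)]

lemma choose_two_mul_mul_factorial_pow (k : ℕ) : (2 * k).choose k * k ! ^ 2 = (2 * k)! := by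
  rw [two_mul, ← Nat.add_choose_mul_factorial_mul_factorial k k]
  ring

lemma choose_four_mul_mul_factorial_pow (k : ℕ) :
    (2 * k).choose k ^ 2 * (4 * k).choose (2 * k) * k ! ^ 4 = (4 * k)! := by
  rw [show 4 * k = 2 * (2 * k) by ring, ← choose_two_mul_mul_factorial_pow (2 * k),
    ← choose_two_mul_mul_factorial_pow k]
  ring

lemma cast_a_eq_sum_expCoeff {n N : ℕ} (hN : n < N) :
    (a n : ℚ) = ∑ k ∈ range N, (n ! * expCoeff 1 (n - k)) ^ 2 * ((2 * k)! / k ! ^ 4) := by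
  rw [a, Nat.cast_sum, eventually_constant_sum (N := n + 1)
    (fun k hk ↦ by rw [expCoeff_of_neg 1 (by lia)]; ring) hN]
  refine sum_congr rfl fun k hk ↦ ?_
  obtain ⟨j, rfl⟩ := Nat.exists_eq_add_of_le (mem_range_succ_iff.1 hk)
  rw [expCoeff_add_natCast_sub, one_pow, ← choose_two_mul_mul_factorial_pow]
  push_cast
  rw [Nat.cast_add_choose ℚ]
  field_simp

theorem isZagierSeq_a : IsZagierSeq 10 3 9 fun n ↦ a n := by
  rintro (_ | n)
  · simp [a, sum_range_succ]
  dsimp only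
  rw [Nat.add_sub_cancel, cast_a_eq_sum_expCoeff (show n + 1 + 1 < n + 3 by lia),
    cast_a_eq_sum_expCoeff (show n + 1 < n + 3 by lia),
    cast_a_eq_sum_expCoeff (show n < n + 3 by lia)]
  refine mul_sum_range_eq_of_telescoping (fun k ↦
    (n + 1) ^ 2 * (3 * k - 4 * n - 8) * k ^ 3 *
      (n ! * expCoeff 1 ((n + 1 + 1 : ℕ) - k)) ^ 2 * ((2 * k)! / k ! ^ 4))
    (by simp) (by rw [expCoeff_of_neg _ (by lia)]; ring) fun k ↦ ?_
  rw [expCoeff_succ_sub_succ, expCoeff_sub_natCast one_ne_zero n k,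
    expCoeff_sub_natCast one_ne_zero (n + 1) k]
  simp only [mul_add_one, Nat.factorial_succ]
  push_cast
  field_simp
  ring

/-- The coefficient of `w ^ n` in `∑ k, c k * w ^ k / (1 - x * w) ^ (m * k + 1)`. -/
def binomTransform {R : Type*} [CommSemiring R] (m : ℕ) (x : R) (c : ℕ → R) (n : ℕ) : R :=
  ∑ kj ∈ antidiagonal n, ((m * kj.1 + kj.2).choose kj.2 : R) * c kj.1 * x ^ kj.2

lemma map_binomTransform {R S : Type*} [CommSemiring R] [CommSemiring S] (f : R →+* S) (m : ℕ)
    (x : R) (c : ℕ → R) (n : ℕ) :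
    f (binomTransform m x c n) = binomTransform m (f x) (fun k ↦ f (c k)) n := by
  simp [binomTransform]

theorem binomTransform_eq_sum_expCoeff {s : ℕ} (x : ℚ) {c d : ℕ → ℚ}
    (hc : ∀ k, c k * k ! ^ (s + 1) = ((s + 1) * k)! * d k) {n N : ℕ} (hN : n < N) :
    binomTransform (s + 1) x c n =
      ∑ k ∈ range N, d k * (n + s * k)! / k ! ^ (s + 1) * expCoeff x (n - k) := by
  rw [binomTransform, Nat.sum_antidiagonal_eq_sum_range_succ
    (fun k j ↦ (((s + 1) * k + j).choose j : ℚ) * c k * x ^ j),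
    eventually_constant_sum (N := n + 1)
      (fun k hk ↦ by rw [expCoeff_of_neg x (by lia), mul_zero]) hN]
  refine sum_congr rfl fun k hk ↦ ?_
  obtain ⟨j, rfl⟩ := Nat.exists_eq_add_of_le (mem_range_succ_iff.1 hk)
  have hck : c k = ((s + 1) * k)! * d k / k ! ^ (s + 1) :=
    eq_div_of_mul_eq (by positivity) (hc k)
  rw [Nat.add_sub_cancel_left, ← Nat.choose_symm_add, Nat.cast_add_choose ℚ, hck,
    expCoeff_add_natCast_sub, show k + j + s * k = (s + 1) * k + j by ring]
  field_simp

theorem IsZagierSeq.isAperySeq_binomTransform {ρ σ β : ℚ} (hρ : ρ ≠ 0) {b : ℕ → ℚ}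
    (hb : IsZagierSeq (ρ + σ) β (ρ * σ) b) :
    IsAperySeq (2 * σ - ρ) (2 * β - ρ) (ρ ^ 2)
      (binomTransform 2 (-ρ) fun k ↦ (2 * k).choose k * b k) := by
  have hb_succ (k : ℕ) : b (k + 1) =
      (((ρ + σ) * k * (k + 1) + β) * b k - ρ * σ * k ^ 2 * b (k - 1)) / (k + 1) ^ 2 :=
    eq_div_of_mul_eq (by positivity) ((mul_comm _ _).trans (hb k))
  have hc (k : ℕ) : ((2 * k).choose k * b k : ℚ) * k ! ^ 2 = (2 * k)! * b k := by
    rw [← choose_two_mul_mul_factorial_pow]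
    push_cast
    ring
  rintro (_ | n)
  · simp [binomTransform, Finset.Nat.antidiagonal_succ, hb_succ]
    ring
  rw [Nat.add_sub_cancel,
    binomTransform_eq_sum_expCoeff (-ρ) hc (show n + 1 + 1 < n + 3 by lia),
    binomTransform_eq_sum_expCoeff (-ρ) hc (show n + 1 < n + 3 by lia),
    binomTransform_eq_sum_expCoeff (-ρ) hc (show n < n + 3 by lia)]
  refine mul_sum_range_eq_of_telescoping (fun k ↦
    -2 * (2 * n + 3) * (k ^ 2 * b k + σ * (n + 2 - k) * (n + 1 + k) * b (k - 1)) *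
      (k / k !) ^ 2 * (n + k)! * expCoeff (-ρ) ((n + 1 + 1 : ℕ) - k))
    (by simp) (by rw [expCoeff_of_neg _ (by lia), mul_zero]) fun k ↦ ?_
  rw [expCoeff_succ_sub_succ, expCoeff_sub_natCast (neg_ne_zero.2 hρ) n k,
    expCoeff_sub_natCast (neg_ne_zero.2 hρ) (n + 1) k, Nat.add_sub_cancel, hb_succ]
  simp only [one_mul, ← add_assoc, add_right_comm _ 1 k, Nat.factorial_succ]
  push_cast
  field_simp
  ring

theorem isAperySeq_binomTransform_four : IsAperySeq (-7) (-3) 81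
    (binomTransform 4 (-27) fun k ↦ (2 * k).choose k ^ 2 * (4 * k).choose (2 * k)) := by
  have hc (k : ℕ) :
      ((2 * k).choose k ^ 2 * (4 * k).choose (2 * k) : ℚ) * k ! ^ 4 = (4 * k)! * 1 := by
    rw [mul_one]
    exact_mod_cast choose_four_mul_mul_factorial_pow k
  rintro (_ | n)
  · simp [binomTransform, Finset.Nat.antidiagonal_succ, Nat.choose]
    norm_num
  rw [Nat.add_sub_cancel,
    binomTransform_eq_sum_expCoeff (-27) hc (show n + 1 + 1 < n + 3 by lia),
    binomTransform_eq_sum_expCoeff (-27) hc (show n + 1 < n + 3 by lia),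
    binomTransform_eq_sum_expCoeff (-27) hc (show n < n + 3 by lia)]
  refine mul_sum_range_eq_of_telescoping (fun k ↦
    -4 * (4 * n + 7) * (k / k !) ^ 4 * (n + 3 * k)! * expCoeff (-27) ((n + 1 + 1 : ℕ) - k))
    (by simp) (by rw [expCoeff_of_neg _ (by lia), mul_zero]) fun k ↦ ?_
  rw [expCoeff_succ_sub_succ, expCoeff_sub_natCast (by norm_num) n k,
    expCoeff_sub_natCast (by norm_num) (n + 1) k]
  simp only [mul_add_one, ← add_assoc, add_right_comm _ 1 (3 * k), Nat.factorial_succ]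
  push_cast
  field_simp
  ring

theorem binomTransform_two_eq_binomTransform_four (R : Type*) [CommRing R] (n : ℕ) :
    binomTransform 2 (-9 : R) (fun k ↦ (2 * k).choose k * a k) n =
      binomTransform 4 (-27 : R) (fun k ↦ (2 * k).choose k ^ 2 * (4 * k).choose (2 * k)) n := by
  have heq_rat : binomTransform 2 (-9 : ℚ) (fun k ↦ (2 * k).choose k * a k) n =
      binomTransform 4 (-27 : ℚ) (fun k ↦ (2 * k).choose k ^ 2 * (4 * k).choose (2 * k)) n := by
    have ha : IsZagierSeq (9 + 1) 3 (9 * 1) fun k ↦ a k := by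
      convert isZagierSeq_a using 1 <;> norm_num
    refine IsAperySeq.eq ?_ isAperySeq_binomTransform_four (by simp [binomTransform, a]) n
    convert ha.isAperySeq_binomTransform (by norm_num) using 1 <;> norm_num
  have heq_int : binomTransform 2 (-9 : ℤ) (fun k ↦ (2 * k).choose k * a k) n =
      binomTransform 4 (-27 : ℤ) (fun k ↦ (2 * k).choose k ^ 2 * (4 * k).choose (2 * k)) n := by
    apply Int.cast_injective (α := ℚ)
    simpa only [← Int.coe_castRingHom, map_binomTransform, map_neg, map_mul, map_pow, map_natCast,
      map_ofNat] using heq_rat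
  simpa only [map_binomTransform, map_neg, map_mul, map_pow, map_natCast, map_ofNat]
    using congrArg (Int.castRingHom R) heq_int

variable {p : ℕ} [Fact p.Prime]

theorem dvd_choose_mul_of_factorial_dvd {m k j c : ℕ} (hk : k < p) (hj : j < p)
    (hp : p ≤ m * k + j) (hc : (m * k)! ∣ c * k ! ^ m) : p ∣ (m * k + j).choose j * c := by
  have hprime : p.Prime := Fact.out
  have hcop : p.Coprime (k ! ^ m * j !) :=
    ((hprime.coprime_factorial_of_lt hk).pow_right m).mul_right
      (hprime.coprime_factorial_of_lt hj)
  have hfac : (m * k + j)! ∣ (m * k + j).choose j * c * (k ! ^ m * j !) := by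
    obtain ⟨d, hd⟩ := hc
    use d
    rw [← Nat.add_choose_mul_factorial_mul_factorial]
    linear_combination (m * k + j).choose j * j ! * hd
  exact hcop.dvd_of_dvd_mul_right ((hprime.dvd_factorial.2 hp).trans hfac)

lemma dvd_of_factorial_dvd_of_le_mul {m k c : ℕ} (hk : k < p) (hp : p ≤ m * k)
    (hc : (m * k)! ∣ c * k ! ^ m) : p ∣ c := by
  simpa using dvd_choose_mul_of_factorial_dvd (j := 0) hk (NeZero.pos p) hp hc

variable {R : Type*} [CommRing R] [CharP R p]

theorem cast_choose_prime_sub_one_sub {m j : ℕ} (h : m + j < p) :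
    ((p - 1 - m).choose j : R) = (-1) ^ j * (m + j).choose j := by
  have hunit : IsUnit (j ! : R) := (IsUnit.natCast_factorial_iff_of_charP p).2 (by lia)
  have hneg : ((p - 1 - m : ℕ) : R) = -(m + 1 : ℕ) := by
    rw [eq_neg_iff_add_eq_zero, ← Nat.cast_add, show p - 1 - m + (m + 1) = p by lia,
      CharP.cast_eq_zero]
  have hdesc : ((p - 1 - m).descFactorial j : R) = (-1) ^ j * (m + 1).ascFactorial j := by
    rw [← descPochhammer_eval_eq_descFactorial, hneg, Nat.cast_ascFactorial,
      ← neg_neg ((m + 1 : ℕ) : R), ascPochhammer_eval_neg_eq_descPochhammer, neg_neg, ← mul_assoc,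
      ← mul_pow, neg_one_mul, neg_neg, one_pow, one_mul]
  apply hunit.mul_left_cancel
  rw [mul_left_comm]
  exact_mod_cast Nat.descFactorial_eq_factorial_mul_choose (p - 1 - m) j ▸
    Nat.ascFactorial_eq_factorial_mul_choose m j ▸ hdesc

theorem one_sub_pow_prime_sub_one_sub {m : ℕ} (hm : m < p) (y : R) :
    (1 - y) ^ (p - 1 - m) = ∑ j ∈ range (p - m), (m + j).choose j * y ^ j := by
  rw [sub_eq_neg_add, add_pow, show p - 1 - m + 1 = p - m by lia]
  refine sum_congr rfl fun j hj ↦ ?_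
  rw [mem_range] at hj
  rw [cast_choose_prime_sub_one_sub (by lia), one_pow, mul_one, ← mul_assoc, ← mul_pow,
    mul_neg_one, neg_neg, mul_comm]

theorem mul_one_sub_pow_eq_sum {m k c : ℕ} (hm : 0 < m) (hk : k < p)
    (hc : (m * k)! ∣ c * k ! ^ m) (y : R) :
    c * (1 - y) ^ (p - 1 - m * k) = ∑ j ∈ range (p - k), (m * k + j).choose j * c * y ^ j := by
  have hkm : k ≤ m * k := Nat.le_mul_of_pos_left k hm
  have htrunc : ∑ j ∈ range (p - m * k), ((m * k + j).choose j * c * y ^ j : R) =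
      ∑ j ∈ range (p - k), ((m * k + j).choose j * c * y ^ j : R) := by
    refine sum_subset (range_subset_range.2 (by lia)) fun j hj hj' ↦ ?_
    rw [mem_range] at hj hj'
    have hdvd := dvd_choose_mul_of_factorial_dvd hk (show j < p by lia) (by lia) hc
    rw [← Nat.cast_mul, (CharP.cast_eq_zero_iff R p _).2 hdvd, zero_mul]
  rw [← htrunc]
  rcases lt_or_ge (m * k) p with hlt | hge
  · rw [one_sub_pow_prime_sub_one_sub hlt, mul_sum]
    exact sum_congr rfl fun j _ ↦ by ring
  · have hc0 : (c : R) = 0 :=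
      (CharP.cast_eq_zero_iff R p c).2 (dvd_of_factorial_dvd_of_le_mul hk hge hc)
    simp [hc0]

-- The exponent `p - 1 - m * k` is truncated only where `c k` vanishes in `R`.
theorem sum_range_mul_one_sub_pow_eq_sum_binomTransform {m : ℕ} (hm : 0 < m) {c : ℕ → ℕ}
    (hc : ∀ k, (m * k)! ∣ c k * k ! ^ m) (x w : R) :
    ∑ k ∈ range p, c k * w ^ k * (1 - x * w) ^ (p - 1 - m * k) =
      ∑ n ∈ range p, binomTransform m x (fun k ↦ (c k : R)) n * w ^ n := by
  let f (k j : ℕ) : R := (m * k + j).choose j * c k * x ^ j * w ^ (k + j)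
  calc
    _ = ∑ k ∈ range p, ∑ j ∈ range (p - k), f k j := by
      refine sum_congr rfl fun k hk ↦ ?_
      rw [mul_right_comm, mul_one_sub_pow_eq_sum hm (mem_range.1 hk) (hc k), sum_mul]
      exact sum_congr rfl fun j _ ↦ by ring
    _ = ∑ n ∈ range p, ∑ kj ∈ antidiagonal n, f kj.1 kj.2 := by
      simp only [Nat.sum_antidiagonal_eq_sum_range_succ f, Nat.succ_eq_add_one,
        sum_range_diag_flip]
    _ = _ := by
      refine sum_congr rfl fun n _ ↦ ?_
      rw [binomTransform, sum_mul]
      exact sum_congr rfl fun kj hkj ↦ by rw [← mem_antidiagonal.1 hkj]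

theorem one_sub_pow_mul_sum_eq_sum_binomTransform {F : Type*} [Field F] [CharP F p] {m : ℕ}
    (hm : 0 < m) {c : ℕ → ℕ} (hc : ∀ k, (m * k)! ∣ c k * k ! ^ m) {x w : F}
    (hxw : 1 - x * w ≠ 0) :
    (1 - x * w) ^ (p - 1) * ∑ k ∈ range p, c k * (w / (1 - x * w) ^ m) ^ k =
      ∑ n ∈ range p, binomTransform m x (fun k ↦ (c k : F)) n * w ^ n := by
  rw [← sum_range_mul_one_sub_pow_eq_sum_binomTransform hm hc, mul_sum]
  refine sum_congr rfl fun k hk ↦ ?_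
  rcases lt_or_ge (m * k) p with hlt | hge
  · rw [pow_sub₀ _ hxw (show m * k ≤ p - 1 by lia), div_pow, pow_mul, div_eq_mul_inv]
    ring
  · have hc0 : (c k : F) = 0 := (CharP.cast_eq_zero_iff F p _).2
      (dvd_of_factorial_dvd_of_le_mul (mem_range.1 hk) hge (hc k))
    simp [hc0]

end

theorem stmt_9_general (p : ℕ) [Fact p.Prime] {F : Type*} [Field F] [CharP F p] (hp3 : p ≠ 3)
    (u : F) (hu1 : 1 + u ≠ 0) (hu3 : 1 + 3 * u ≠ 0) :
    (1 + u) ^ (p - 1) *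
        ∑ k ∈ range p, (Nat.choose (2 * k) k : F) * (a k : F) * (u / (9 * (1 + u) ^ 2)) ^ k =
      (1 + 3 * u) ^ (p - 1) *
        ∑ k ∈ range p, (Nat.choose (2 * k) k : F) ^ 2 * (Nat.choose (4 * k) (2 * k) : F) *
          (u / (9 * (1 + 3 * u) ^ 4)) ^ k := by
  have h9 : (9 : F) ≠ 0 := by
    rw [show (9 : F) = (3 ^ 2 : ℕ) by norm_num, Ne, CharP.cast_eq_zero_iff F p]
    exact fun h ↦ hp3 (Nat.prime_eq_prime_of_dvd_pow Fact.out Nat.prime_three h)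
  have hw1 : 1 - -9 * (u / 9) = 1 + u := by field_simp; ring
  have hw3 : 1 - -27 * (u / 9) = 1 + 3 * u := by field_simp; ring
  have hleft := one_sub_pow_mul_sum_eq_sum_binomTransform (p := p) two_pos
    (c := fun k ↦ (2 * k).choose k * a k)
    (fun k ↦ ⟨a k, by rw [← choose_two_mul_mul_factorial_pow]; ring⟩) (hw1 ▸ hu1)
  have hright := one_sub_pow_mul_sum_eq_sum_binomTransform (p := p) four_pos
    (c := fun k ↦ (2 * k).choose k ^ 2 * (4 * k).choose (2 * k))
    (fun k ↦ (choose_four_mul_mul_factorial_pow k).symm.dvd) (hw3 ▸ hu3)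
  rw [hw1] at hleft
  rw [hw3] at hright
  push_cast at hleft hright
  simp only [← div_div, hleft, hright, binomTransform_two_eq_binomTransform_four]

theorem stmt_9 (p : ℕ) [Fact p.Prime] (hodd : Odd p) (u : ℤ)
    (hu : ¬ (p : ℤ) ∣ u * (u + 1) * (3 * u + 1)) :
    (∑ k ∈ Finset.range p,
        (Nat.choose (2 * k) k : ZMod p) * (a k : ZMod p) *
          ((u : ZMod p) / (9 * (1 + (u : ZMod p)) ^ 2)) ^ k)
      = ∑ k ∈ Finset.range p,
          (Nat.choose (2 * k) k : ZMod p) ^ 2 * (Nat.choose (4 * k) (2 * k) : ZMod p) *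
            ((u : ZMod p) / (9 * (1 + 3 * (u : ZMod p)) ^ 4)) ^ k := by
  obtain ⟨⟨-, hu1⟩, hu3⟩ :
      ((u : ZMod p) ≠ 0 ∧ 1 + (u : ZMod p) ≠ 0) ∧ 1 + 3 * (u : ZMod p) ≠ 0 := by
    simpa [← ZMod.intCast_zmod_eq_zero_iff_dvd, add_comm] using hu
  rcases eq_or_ne p 3 with rfl | hp3
  -- Since `9 = 0` in `ZMod 3`, both quotients are zero and only the terms `k = 0` remain.
  · simp [show (9 : ZMod 3) = 0 from rfl, sum_range_succ, a]
  · simpa [ZMod.pow_card_sub_one_eq_one, hu1, hu3] using stmt_9_general p hp3 (u : ZMod p) hu1 hu3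
end

section
/- Let p be an odd prime and let u be an integer with u(u+1)(3u+1) not divisible by p and u ≢ -3 (mod p). Then Σ_{k=0}^{p-1} C(2k,k)^2 · C(4k,2k) · (u/(9(1+3u)^4))^k ≡ Σ_{k=0}^{p-1} C(2k,k)^2 · C(4k,2k) · (u^3/(9(3+u)^4))^k (mod p). -/
open Finset

/-!
With `u = 9 w` the two arguments become `w / (1 + 27 w) ^ 4` and `w ^ 3 / (1 + 3 w) ^ 4`. By
Fermat's little theorem `(1 - c w) ^ (-4 k)` takes the values of the polynomial
`(1 - c w) ^ (p - 1 - 4 k)`, whose coefficients are mod `p` the first `p` coefficients of the power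
series `(1 - c w) ^ (-(4 k + 1))`; for `4 k ≥ p` the multinomial coefficient `(4 k)! / k! ^ 4`
vanishes. So both sides are polynomials `∑ m < p, a m * w ^ m` with explicit binomial sums `a m`.
Already over `ℤ` the two sequences `a` coincide: they satisfy the three-term recurrence of the
Almkvist-Zudilin numbers and have the same initial values.
-/

namespace AlmkvistZudilin

section CharP

open Polynomial

variable {R : Type*} [CommRing R] {p : ℕ} [Fact p.Prime]

lemma coeff_one_sub_X_pow [CharP R p] {a q j : ℕ} (h : q + a + 1 = p) (hj : j < p) :
    ((1 - X : R[X]) ^ q).coeff j = (a + j).choose a := by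
  have : CharP (PowerSeries R) p := charP_of_injective_ringHom PowerSeries.C_injective p
  have hpow : (1 - PowerSeries.X : PowerSeries R) ^ q
      = (1 - PowerSeries.X ^ p) * PowerSeries.mk fun n ↦ ((a + n).choose a : R) := by
    rw [← one_pow p, ← sub_pow_char, one_pow, ← h, add_assoc, pow_add, mul_assoc,
      mul_comm _ (PowerSeries.mk _), PowerSeries.mk_add_choose_mul_one_sub_pow_eq_one, mul_one]
  rw [← Polynomial.coeff_coe, Polynomial.coe_pow, Polynomial.coe_sub, Polynomial.coe_one,
    Polynomial.coe_X, hpow, sub_mul, one_mul, map_sub, PowerSeries.coeff_X_pow_mul',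
    if_neg hj.not_ge, sub_zero, PowerSeries.coeff_mk]

lemma pow_mul_one_sub_pow_eq_sum [CharP R p] {i j q : ℕ} (h : q + (i + j) + 1 = p) (c x : R) :
    x ^ i * (1 - c * x) ^ q
      = ∑ m ∈ range p, ((m + j).choose (i + j) : R) * c ^ (m - i) * x ^ m := by
  set f : R[X] := X ^ i * ((1 - X : R[X]) ^ q).comp (C c * X) with hf
  have hdeg : f.natDegree < p := by
    have : f.natDegree ≤ i + q := by
      rw [hf]
      simp only [pow_comp, sub_comp, one_comp, X_comp]
      compute_degree
    omega
  calc x ^ i * (1 - c * x) ^ q = f.eval x := by simp [hf]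
    _ = ∑ m ∈ range p, f.coeff m * x ^ m := eval_eq_sum_range' hdeg x
    _ = _ := by
      refine sum_congr rfl fun m hm ↦ ?_
      rw [hf, coeff_X_pow_mul', comp_C_mul_X_coeff]
      have hm := mem_range.1 hm
      split_ifs with him
      · rw [coeff_one_sub_X_pow h (by omega), show i + j + (m - i) = m + j by omega]
      · rw [Nat.choose_eq_zero_of_lt (by omega)]
        simp

lemma pow_div_one_sub_pow_eq_sum {i j : ℕ} (h : i + j < p) {c x : ZMod p} (hx : 1 - c * x ≠ 0) :
    x ^ i / (1 - c * x) ^ (i + j)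
      = ∑ m ∈ range p, ((m + j).choose (i + j) : ZMod p) * c ^ (m - i) * x ^ m := by
  obtain ⟨q, hq⟩ : ∃ q, q + (i + j) + 1 = p := ⟨p - 1 - (i + j), by omega⟩
  have fermat : (1 - c * x) ^ q * (1 - c * x) ^ (i + j) = 1 := by
    rw [← pow_add, show q + (i + j) = p - 1 by omega, ZMod.pow_card_sub_one_eq_one hx]
  rw [← pow_mul_one_sub_pow_eq_sum hq, div_eq_iff (pow_ne_zero _ hx), mul_assoc, fermat, mul_one]

lemma sum_mul_pow_div_one_sub_pow_eq_sum (s t : ℕ) {a : ℕ → ZMod p}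
    (ha : ∀ k < p, p ≤ (s + t) * k → a k = 0) {c x : ZMod p} (hx : 1 - c * x ≠ 0) :
    ∑ k ∈ range p, a k * (x ^ s / (1 - c * x) ^ (s + t)) ^ k
      = ∑ m ∈ range p, (∑ k ∈ range p,
          c ^ (m - s * k) * (a k * (m + t * k).choose ((s + t) * k))) * x ^ m := by
  simp only [sum_mul]
  rw [sum_comm]
  refine sum_congr rfl fun k hk ↦ ?_
  rcases lt_or_ge ((s + t) * k) p with hlt | hge
  · rw [add_mul] at hlt
    rw [div_pow, ← pow_mul, ← pow_mul, add_mul, pow_div_one_sub_pow_eq_sum hlt hx, mul_sum]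
    exact sum_congr rfl fun m _ ↦ by ring
  · simp [ha k (mem_range.1 hk) hge]

end CharP

/-- The multinomial coefficient `(4k)! / k!^4`, in the factored form in which it enters the sums. -/
def quadrinomial (k : ℕ) : ℕ := (2 * k).choose k ^ 2 * (4 * k).choose (2 * k)

lemma cast_quadrinomial {R : Type*} [CommSemiring R] (k : ℕ) :
    (quadrinomial k : R) = ((2 * k).choose k : R) ^ 2 * ((4 * k).choose (2 * k) : R) := by
  push_cast [quadrinomial]
  rfl

lemma quadrinomial_mul_factorial_pow (k : ℕ) :
    quadrinomial k * k.factorial ^ 4 = (4 * k).factorial := by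
  have h₂ := Nat.add_choose_mul_factorial_mul_factorial k k
  have h₄ := Nat.add_choose_mul_factorial_mul_factorial (2 * k) (2 * k)
  rw [show k + k = 2 * k by ring] at h₂
  rw [show 2 * k + 2 * k = 4 * k by ring] at h₄
  rw [← h₄, ← h₂, quadrinomial]
  ring

lemma cast_quadrinomial_eq_zero {p : ℕ} [hp : Fact p.Prime] {k : ℕ} (hk : k < p)
    (h : p ≤ 4 * k) : (quadrinomial k : ZMod p) = 0 := by
  have hdvd : p ∣ quadrinomial k * k.factorial ^ 4 := by
    rw [quadrinomial_mul_factorial_pow]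
    exact hp.out.dvd_factorial.2 h
  have hcop : p.Coprime (k.factorial ^ 4) :=
    .pow_right _ <| hp.out.coprime_iff_not_dvd.2 <| hp.out.dvd_factorial.not.2 hk.not_ge
  exact (ZMod.natCast_eq_zero_iff _ _).2 (hcop.dvd_of_dvd_mul_right hdvd)

/-- The multinomial coefficient `N! / (k!^4 (N - 4k)!)`, which is zero when `N < 4k`. -/
def quadChoose (N k : ℕ) : ℕ := quadrinomial k * N.choose (4 * k)

lemma quadChoose_eq_zero {N k : ℕ} (h : N < 4 * k) : quadChoose N k = 0 := by
  rw [quadChoose, Nat.choose_eq_zero_of_lt h, mul_zero]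

lemma quadChoose_mul_factorial_pow (N k : ℕ) :
    quadChoose N k * k.factorial ^ 4 = N.descFactorial (4 * k) := by
  rw [quadChoose, mul_right_comm, quadrinomial_mul_factorial_pow,
    Nat.descFactorial_eq_factorial_mul_choose]

lemma pow_four_mul_quadChoose_add_succ {i r : ℕ} (h : i + r = 4) (N k : ℕ) :
    ((k : ℚ) + 1) ^ 4 * quadChoose (N + i) (k + 1)
      = (descPochhammer ℚ i).eval (N + i : ℚ) * (descPochhammer ℚ r).eval (N - 4 * k : ℚ)
        * quadChoose N k := by
  have hfac : (k.factorial : ℚ) ^ 4 ≠ 0 := by positivity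
  have hN := congrArg (Nat.cast : ℕ → ℚ) (quadChoose_mul_factorial_pow N k)
  have hNi := congrArg (Nat.cast : ℕ → ℚ) (quadChoose_mul_factorial_pow (N + i) (k + 1))
  rw [← descPochhammer_eval_eq_descFactorial] at hN hNi
  rw [show 4 * (k + 1) = i + (4 * k + r) by omega, ← descPochhammer_mul,
    ← descPochhammer_mul ℚ (4 * k)] at hNi
  simp only [Nat.factorial_succ, Nat.cast_mul, Nat.cast_pow, Nat.cast_add, Nat.cast_one,
    Nat.cast_ofNat, Polynomial.mul_comp, Polynomial.eval_mul, Polynomial.eval_comp,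
    Polynomial.eval_sub, Polynomial.eval_X, Polynomial.eval_natCast, Polynomial.eval_ofNat,
    add_sub_cancel_right, ← hN] at hNi
  refine mul_right_cancel₀ hfac ?_
  linear_combination hNi

/-- The `k`-th summand of `azSum s t c n`; it is meant for `s + t = 4`. The truncated subtraction
in the exponent is harmless, since the binomial coefficient is zero when `n < s * k`. -/
def azTerm (s t : ℕ) (c : ℤ) (n k : ℕ) : ℤ :=
  c ^ (n - s * k) * (quadrinomial k * (n + t * k).choose ((s + t) * k))

lemma azTerm_zero (s t : ℕ) (c : ℤ) (n : ℕ) : azTerm s t c n 0 = c ^ n := by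
  simp [azTerm, quadrinomial]

lemma azTerm_eq_zero {s t : ℕ} {c : ℤ} {n k : ℕ} (h : n < s * k) : azTerm s t c n k = 0 := by
  rw [azTerm, Nat.choose_eq_zero_of_lt (by rw [add_mul]; omega)]
  simp

lemma cast_azTerm {s t : ℕ} (hst : s + t = 4) {c : ℤ} (hc : c ≠ 0) (n k : ℕ) :
    (azTerm s t c n k : ℚ) = c ^ n * ((c : ℚ) ^ s)⁻¹ ^ k * quadChoose (n + t * k) k := by
  have hc' : (c : ℚ) ≠ 0 := mod_cast hc
  rcases lt_or_ge n (s * k) with h | h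
  · rw [azTerm_eq_zero h, quadChoose_eq_zero (by rw [← hst, add_mul]; omega)]
    simp
  · rw [azTerm, hst, quadChoose, inv_pow, ← pow_mul, ← pow_sub₀ _ hc' h]
    push_cast
    rfl

/-- The second-order difference operator annihilating the Almkvist-Zudilin numbers
`1, -3, 9, -3, -279, 2997, …`. -/
def recurrenceOp (a : ℕ → ℤ) (n : ℕ) : ℤ :=
  (n + 2) ^ 3 * a (n + 2) + (2 * n + 3) * (7 * (n + 1) ^ 2 + 7 * (n + 1) + 3) * a (n + 1)
    + 81 * (n + 1) ^ 3 * a n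

-- The right-hand side is the certificate of Zeilberger's algorithm. The inductive step is a
-- polynomial identity once every summand is a multiple of `quadChoose (n + 1 + 3 * j) j`.
lemma sum_recurrenceOp_azTerm_one_three (n N : ℕ) :
    ∑ k ∈ range (N + 1), recurrenceOp (azTerm 1 3 (-27) · k) n
      = -4 * (4 * n + 7) * (n + 3 * N + 2) * (n + 3 * N + 3) * azTerm 1 3 (-27) (n + 1) N := by
  induction N with
  | zero =>
    simp only [zero_add, sum_range_one, recurrenceOp, azTerm_zero]
    push_cast
    ring
  | succ j ih =>
    rw [sum_range_succ, ih]
    apply Int.cast_injective (α := ℚ)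
    have h₂ := pow_four_mul_quadChoose_add_succ (i := 2) (r := 2) rfl (n + 1 + 3 * j) j
    have h₃ := pow_four_mul_quadChoose_add_succ (i := 3) (r := 1) rfl (n + 1 + 3 * j) j
    have h₄ := pow_four_mul_quadChoose_add_succ (i := 4) (r := 0) rfl (n + 1 + 3 * j) j
    simp only [descPochhammer_succ_eval, descPochhammer_zero, Polynomial.eval_one] at h₂ h₃ h₄
    push_cast [recurrenceOp,
      cast_azTerm (s := 1) (t := 3) rfl (show (-27 : ℤ) ≠ 0 by norm_num)] at h₂ h₃ h₄ ⊢
    rw [show n + 2 + 3 * (j + 1) = n + 1 + 3 * j + 4 by ring,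
      show n + 1 + 3 * (j + 1) = n + 1 + 3 * j + 3 by ring,
      show n + 3 * (j + 1) = n + 1 + 3 * j + 2 by ring]
    refine mul_left_cancel₀ (show ((j : ℚ) + 1) ^ 4 ≠ 0 by positivity) ?_
    linear_combination
      (n + 2 : ℚ) ^ 3 * (-27) ^ (n + 2) * (-1 / 27) ^ (j + 1) * h₄
      + ((2 * n + 3) * (7 * (n + 1) ^ 2 + 7 * (n + 1) + 3)
          + 4 * (4 * n + 7) * (n + 3 * (j + 1) + 2) * (n + 3 * (j + 1) + 3))
        * (-27 : ℚ) ^ (n + 1) * (-1 / 27) ^ (j + 1) * h₃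
      + 81 * (n + 1 : ℚ) ^ 3 * (-27) ^ n * (-1 / 27) ^ (j + 1) * h₂

lemma sum_recurrenceOp_azTerm_three_one (n N : ℕ) :
    ∑ k ∈ range (N + 1), recurrenceOp (azTerm 3 1 (-3) · k) n
      = -4 * (4 * n + 5) * (n + 1 - 3 * N) * (n - 3 * N) * azTerm 3 1 (-3) (n + 1) N := by
  induction N with
  | zero =>
    simp only [zero_add, sum_range_one, recurrenceOp, azTerm_zero]
    push_cast
    ring
  | succ j ih =>
    rw [sum_range_succ, ih]
    apply Int.cast_injective (α := ℚ)
    have h₀ := pow_four_mul_quadChoose_add_succ (i := 0) (r := 4) rfl (n + 1 + j) j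
    have h₁ := pow_four_mul_quadChoose_add_succ (i := 1) (r := 3) rfl (n + 1 + j) j
    have h₂ := pow_four_mul_quadChoose_add_succ (i := 2) (r := 2) rfl (n + 1 + j) j
    simp only [descPochhammer_succ_eval, descPochhammer_zero, Polynomial.eval_one] at h₀ h₁ h₂
    push_cast [recurrenceOp, one_mul,
      cast_azTerm (s := 3) (t := 1) rfl (show (-3 : ℤ) ≠ 0 by norm_num)] at h₀ h₁ h₂ ⊢
    rw [show n + 2 + (j + 1) = n + 1 + j + 2 by ring,
      show n + 1 + (j + 1) = n + 1 + j + 1 by ring, show n + (j + 1) = n + 1 + j + 0 by ring]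
    refine mul_left_cancel₀ (show ((j : ℚ) + 1) ^ 4 ≠ 0 by positivity) ?_
    linear_combination
      (n + 2 : ℚ) ^ 3 * (-3) ^ (n + 2) * (-1 / 27) ^ (j + 1) * h₂
      + ((2 * n + 3) * (7 * (n + 1) ^ 2 + 7 * (n + 1) + 3)
          + 4 * (4 * n + 5) * (n + 1 - 3 * (j + 1)) * (n - 3 * (j + 1)))
        * (-3 : ℚ) ^ (n + 1) * (-1 / 27) ^ (j + 1) * h₁
      + 81 * (n + 1 : ℚ) ^ 3 * (-3) ^ n * (-1 / 27) ^ (j + 1) * h₀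

/-- Two expressions for the Almkvist-Zudilin numbers, at `(s, t, c) = (1, 3, -27)` and
`(3, 1, -3)`. If `s + t = 4`, this is the coefficient of `w ^ n` in the power series
`∑ k, quadrinomial k * w ^ (s * k) / (1 - c * w) ^ (4 * k + 1)`. -/
def azSum (s t : ℕ) (c : ℤ) (n : ℕ) : ℤ := ∑ k ∈ range (n + 1), azTerm s t c n k

lemma azSum_eq_sum_range {s : ℕ} (hs : 0 < s) (t : ℕ) (c : ℤ) {n N : ℕ} (h : n < N) :
    azSum s t c n = ∑ k ∈ range N, azTerm s t c n k :=
  sum_subset (range_subset_range.2 h) fun k _ hk ↦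
    azTerm_eq_zero <| (by simpa using hk : n < k).trans_le (Nat.le_mul_of_pos_left k hs)

lemma recurrenceOp_azSum {s : ℕ} (hs : 0 < s) (t : ℕ) (c : ℤ) (n : ℕ) :
    recurrenceOp (azSum s t c) n = ∑ k ∈ range (n + 2 + 1), recurrenceOp (azTerm s t c · k) n := by
  simp only [recurrenceOp, sum_add_distrib, ← mul_sum]
  rw [azSum, azSum_eq_sum_range hs t c (show n + 1 < n + 2 + 1 by omega),
    azSum_eq_sum_range hs t c (show n < n + 2 + 1 by omega)]

lemma recurrenceOp_azSum_one_three : recurrenceOp (azSum 1 3 (-27)) = 0 := by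
  funext n
  rw [recurrenceOp_azSum one_pos, sum_recurrenceOp_azTerm_one_three,
    azTerm_eq_zero (by omega), mul_zero, Pi.zero_apply]

lemma recurrenceOp_azSum_three_one : recurrenceOp (azSum 3 1 (-3)) = 0 := by
  funext n
  rw [recurrenceOp_azSum three_pos, sum_recurrenceOp_azTerm_three_one,
    azTerm_eq_zero (by omega), mul_zero, Pi.zero_apply]

lemma eq_of_recurrenceOp_eq {a b : ℕ → ℤ} (h : recurrenceOp a = recurrenceOp b)
    (h₀ : a 0 = b 0) (h₁ : a 1 = b 1) : a = b := by
  funext n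
  induction n using Nat.twoStepInduction with
  | zero => exact h₀
  | one => exact h₁
  | more n ih₀ ih₁ =>
    have hn := congrFun h n
    rw [recurrenceOp, recurrenceOp, ih₀, ih₁] at hn
    refine mul_left_cancel₀ (show ((n : ℤ) + 2) ^ 3 ≠ 0 by positivity) ?_
    linear_combination hn

theorem azSum_one_three_eq_azSum_three_one : azSum 1 3 (-27) = azSum 3 1 (-3) :=
  eq_of_recurrenceOp_eq (recurrenceOp_azSum_one_three.trans recurrenceOp_azSum_three_one.symm)
    (by decide) (by decide)

lemma sum_quadrinomial_mul_pow_div_eq_sum_azSum {p : ℕ} [Fact p.Prime] {s t : ℕ} (hs : 0 < s)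
    (hst : s + t = 4) (c : ℤ) {w : ZMod p} (hw : 1 - c * w ≠ 0) :
    ∑ k ∈ range p, (quadrinomial k : ZMod p) * (w ^ s / (1 - c * w) ^ 4) ^ k
      = ∑ m ∈ range p, (azSum s t c m : ZMod p) * w ^ m := by
  have expand := sum_mul_pow_div_one_sub_pow_eq_sum s t (a := fun k ↦ (quadrinomial k : ZMod p))
    (fun k hk h ↦ cast_quadrinomial_eq_zero hk (hst ▸ h)) hw
  rw [hst] at expand
  rw [expand]
  refine sum_congr rfl fun m hm ↦ ?_
  rw [azSum_eq_sum_range hs t c (mem_range.1 hm)]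
  push_cast [azTerm, hst]
  rfl

theorem sum_quadrinomial_mul_pow_eq {p : ℕ} [Fact p.Prime] {w : ZMod p}
    (h₁ : 1 + 27 * w ≠ 0) (h₃ : 1 + 3 * w ≠ 0) :
    ∑ k ∈ range p, (quadrinomial k : ZMod p) * (w / (1 + 27 * w) ^ 4) ^ k
      = ∑ k ∈ range p, (quadrinomial k : ZMod p) * (w ^ 3 / (1 + 3 * w) ^ 4) ^ k := by
  have e₁ : 1 + 27 * w = 1 - (-27 : ℤ) * w := by push_cast; ring
  have e₃ : 1 + 3 * w = 1 - (-3 : ℤ) * w := by push_cast; ring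
  rw [e₁] at h₁ ⊢
  rw [e₃] at h₃ ⊢
  rw [sum_quadrinomial_mul_pow_div_eq_sum_azSum three_pos (t := 1) rfl (-3) h₃,
    ← azSum_one_three_eq_azSum_three_one,
    ← sum_quadrinomial_mul_pow_div_eq_sum_azSum one_pos (t := 3) rfl (-27) h₁, pow_one]

end AlmkvistZudilin

open AlmkvistZudilin in
theorem stmt_10 (p : ℕ) [Fact p.Prime] (hodd : Odd p) (u : ℤ)
    (hu : ¬ (p : ℤ) ∣ u * (u + 1) * (3 * u + 1)) (hu3 : ¬ (u ≡ -3 [ZMOD (p : ℤ)])) :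
    (∑ k ∈ Finset.range p,
        (Nat.choose (2 * k) k : ZMod p) ^ 2 * (Nat.choose (4 * k) (2 * k) : ZMod p) *
          ((u : ZMod p) / (9 * (1 + 3 * (u : ZMod p)) ^ 4)) ^ k)
      = ∑ k ∈ Finset.range p,
          (Nat.choose (2 * k) k : ZMod p) ^ 2 * (Nat.choose (4 * k) (2 * k) : ZMod p) *
            ((u : ZMod p) ^ 3 / (9 * (3 + (u : ZMod p)) ^ 4)) ^ k := by
  simp only [← cast_quadrinomial]
  have h₁ : 1 + 3 * (u : ZMod p) ≠ 0 := fun h ↦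
    hu <| .mul_left ((ZMod.intCast_zmod_eq_zero_iff_dvd _ p).1 (by push_cast; rwa [add_comm])) _
  have h₃ : 3 + (u : ZMod p) ≠ 0 := fun h ↦
    hu3 <| (ZMod.intCast_eq_intCast_iff _ _ p).1 (by push_cast; linear_combination h)
  have nine_eq : (9 : ZMod p) = 3 * 3 := by norm_num
  by_cases hthree : (3 : ZMod p) = 0
  · simp [nine_eq, hthree]
  · obtain ⟨w, hw⟩ : ∃ w, (u : ZMod p) = 9 * w := ⟨u / 9, by rw [nine_eq]; field_simp⟩
    have e₁ : 1 + 3 * (u : ZMod p) = 1 + 27 * w := by rw [hw]; ring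
    have e₃ : 3 + (u : ZMod p) = 3 * (1 + 3 * w) := by rw [hw]; ring
    rw [e₁] at h₁ ⊢
    rw [e₃] at h₃ ⊢
    have h₃' : 1 + 3 * w ≠ 0 := right_ne_zero_of_mul h₃
    convert sum_quadrinomial_mul_pow_eq h₁ h₃' using 4 <;> rw [hw, nine_eq] <;> field_simp
end
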